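/- arXiv:1504.06213 — 2 statements merged into one kernel-verified Lean document; each statement's English description precedes it below -/
import Mathlib

section
/- Let F be a field of characteristic zero and let μ be a constant with 0 ≤ μ < 1. There exist constants c > 0 and n₀ (depending only on μ) such that for all n ≥ n₀ the following holds: with N = n·ψ the number of variables of NW_{n,μ}, if NW_{n,μ} = ∑_{i=1}^{T} ∏_{j=1}^{d} Q_{ij} where each Q_{ij} ∈ F[X_1,…,X_N] depends on at most N^μ of the variables, then T·d ≥ n^{c·√n}. -/
open MvPolynomial

/-- The parameter `γ` in the definition of the Nisan–Wigderson polynomial,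
with `δ = (1-μ)/2`. -/
noncomputable def nwGamma (μ : ℝ) : ℝ :=
  (2 * (μ + (1 - μ) / 2) + 1) / (1 - (μ + (1 - μ) / 2))

/-- The degree parameter `D` of the Nisan–Wigderson polynomial `NW_{n,μ}`:
`D = ((γ+ρ)/(2(1+γ)))·n` with `ρ = (μ+δ)·log N/log n`. -/
noncomputable def nwDreal (μ : ℝ) (n N : ℕ) : ℝ :=
  (nwGamma μ + (μ + (1 - μ) / 2) * Real.log N / Real.log n) / (2 * (1 + nwGamma μ)) * n

/-- The Nisan–Wigderson polynomial `NW_{n,μ}` on the variables `X_{i,j}`,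
`i ∈ [n]`, `j ∈ F_ψ`: the sum, over all univariate polynomials `f` over `F_ψ` of
degree at most `D - 1` (encoded by their coefficient vectors), of `∏ i, X_{i, f(i)}`. -/
noncomputable def NWpoly (F : Type*) [Field F] (μ : ℝ) (n ψ : ℕ) [NeZero ψ] :
    MvPolynomial (Fin n × ZMod ψ) F :=
  ∑ c : Fin ⌊nwDreal μ n (n * ψ)⌋₊ → ZMod ψ,
    ∏ i : Fin n, X (i, ∑ k : Fin ⌊nwDreal μ n (n * ψ)⌋₊, c k * ((i : ℕ) : ZMod ψ) ^ (k : ℕ))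

open scoped BigOperators

/-- The exponent of the squarefree monomial with support `S`. -/
noncomputable def sqfreeExp {σ : Type*} (S : Finset σ) : σ →₀ ℕ :=
  ∑ i ∈ S, Finsupp.single i 1

/-- The coefficient of the squarefree monomial with support `S`. -/
noncomputable def sqfreeCoeff {σ F : Type*} [Field F] (φ : MvPowerSeries σ F) (S : Finset σ) : F :=
  MvPowerSeries.coeff (sqfreeExp S) φ

section Algebra

variable {σ F : Type*} [DecidableEq σ] [Field F]

lemma sqfreeExp_apply (S : Finset σ) (i : σ) : sqfreeExp S i = if i ∈ S then 1 else 0 := by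
  simp [sqfreeExp, Finsupp.finsetSum_apply, Finsupp.single_apply]

lemma sqfreeExp_empty {σ : Type*} : sqfreeExp (∅ : Finset σ) = 0 := by
  simp [sqfreeExp]

lemma support_sqfreeExp (S : Finset σ) : (sqfreeExp S).support = S := by
  ext i
  simp [sqfreeExp_apply]

lemma sqfreeExp_injective : Function.Injective (sqfreeExp : Finset σ → σ →₀ ℕ) := by
  intro S T h
  rw [← support_sqfreeExp S, h, support_sqfreeExp]

lemma sqfreeCoeff_mul (φ ψ : MvPowerSeries σ F) (S : Finset σ) :
    sqfreeCoeff (φ * ψ) S = ∑ T ∈ S.powerset, sqfreeCoeff φ T * sqfreeCoeff ψ (S \ T) := by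
  classical
  unfold sqfreeCoeff
  rw [MvPowerSeries.coeff_mul]
  symm
  refine Finset.sum_bij (fun T _ => (sqfreeExp T, sqfreeExp (S \ T))) ?_ ?_ ?_ ?_
  · intro T hT
    rw [Finset.mem_powerset] at hT
    rw [Finset.HasAntidiagonal.mem_antidiagonal]
    ext i
    have := @hT i
    simp only [Finsupp.add_apply, sqfreeExp_apply, Finset.mem_sdiff]
    split_ifs <;> tauto
  · intro T _ T' _ h
    exact sqfreeExp_injective (Prod.ext_iff.mp h).1
  · rintro ⟨p, q⟩ h
    rw [Finset.HasAntidiagonal.mem_antidiagonal] at h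
    have key : ∀ i, p i + q i = if i ∈ S then 1 else 0 := fun i => by
      rw [← sqfreeExp_apply, ← h]; rfl
    refine ⟨p.support, ?_, ?_⟩
    · rw [Finset.mem_powerset]
      intro i hi
      have h1 := key i
      rw [Finsupp.mem_support_iff] at hi
      by_contra hc
      simp [hc] at h1
      exact hi h1.1
    · ext i
      · have h1 := key i
        simp only [sqfreeExp_apply, Finsupp.mem_support_iff]
        split_ifs at h1 ⊢ <;> omega
      · have h1 := key i
        simp only [sqfreeExp_apply, Finset.mem_sdiff, Finsupp.mem_support_iff]
        by_cases hi : i ∈ S <;> by_cases hp : p i = 0 <;>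
          simp only [hi, hp, if_true, if_false, not_true, not_false_iff, ne_eq, and_true,
            and_false] at h1 ⊢ <;> omega
  · intro T _
    rfl

lemma sqfreeCoeff_one (S : Finset σ) :
    sqfreeCoeff (1 : MvPowerSeries σ F) S = if S = ∅ then 1 else 0 := by
  classical
  unfold sqfreeCoeff
  rw [MvPowerSeries.coeff_one]
  congr 1
  rw [← sqfreeExp_empty, sqfreeExp_injective.eq_iff]

/-- The part of a power series involving only the variables in `Y`. -/
noncomputable def restrictVars (Y : Finset σ) (φ : MvPowerSeries σ F) : MvPowerSeries σ F :=
  fun s => if s.support ⊆ Y then MvPowerSeries.coeff s φ else 0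

lemma sqfreeCoeff_restrictVars (Y : Finset σ) (φ : MvPowerSeries σ F) (S : Finset σ) :
    sqfreeCoeff (restrictVars Y φ) S = if S ⊆ Y then sqfreeCoeff φ S else 0 := by
  change (if (sqfreeExp S).support ⊆ Y then _ else _) = _
  rw [support_sqfreeExp]
  rfl

lemma sqfreeCoeff_empty {σ F : Type*} [Field F] (φ : MvPowerSeries σ F) :
    sqfreeCoeff φ ∅ = MvPowerSeries.constantCoeff φ := by
  unfold sqfreeCoeff
  rw [sqfreeExp_empty]
  rfl

lemma constantCoeff_restrictVars (Y : Finset σ) (φ : MvPowerSeries σ F) :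
    MvPowerSeries.constantCoeff (restrictVars Y φ) = MvPowerSeries.constantCoeff φ := by
  rw [← sqfreeCoeff_empty, ← sqfreeCoeff_empty, sqfreeCoeff_restrictVars,
    if_pos (Finset.empty_subset Y)]

/-- If `φ` involves only the variables in `V`, so does its inverse. -/
lemma sqfreeCoeff_inv_eq_zero {φ : MvPowerSeries σ F} {V : Finset σ}
    (h0 : MvPowerSeries.constantCoeff φ ≠ 0)
    (hV : ∀ S, sqfreeCoeff φ S ≠ 0 → S ⊆ V) (S : Finset σ) (hS : ¬ S ⊆ V) :
    sqfreeCoeff φ⁻¹ S = 0 := by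
  induction S using Finset.strongInduction with
  | H S ih =>
    have hne : S ≠ ∅ := by rintro rfl; exact hS (Finset.empty_subset _)
    have h1 := sqfreeCoeff_mul φ φ⁻¹ S
    rw [MvPowerSeries.mul_inv_cancel φ h0, sqfreeCoeff_one, if_neg hne,
      Finset.sum_eq_single (∅ : Finset σ)] at h1
    · rw [Finset.sdiff_empty, sqfreeCoeff_empty] at h1
      exact (mul_eq_zero.mp h1.symm).resolve_left h0
    · intro T hT hT0
      rw [Finset.mem_powerset] at hT
      by_cases hc : sqfreeCoeff φ T = 0
      · rw [hc, zero_mul]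
      · rw [ih (S \ T), mul_zero]
        · exact Finset.sdiff_ssubset hT (Finset.nonempty_iff_ne_empty.mpr hT0)
        · intro hsub
          exact hS fun i hi => by
            by_cases hiT : i ∈ T
            · exact hV T hc hiT
            · exact hsub (Finset.mem_sdiff.mpr ⟨hi, hiT⟩)
    · intro h
      exact absurd (Finset.empty_mem_powerset S) h

/-- A power series in at most `r` variables factors, on the level of squarefree monomials, as
its part free of the variables outside `Y` times a series whose monomials have `Y`-degree at
most `r` times their degree outside `Y`. -/
lemma card_inter_le_of_sqfreeCoeff_ne_zero {u : MvPowerSeries σ F} {V : Finset σ} (Y : Finset σ)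
    {r : ℕ} (hr : V.card ≤ r) (h0 : MvPowerSeries.constantCoeff u ≠ 0)
    (hV : ∀ S, sqfreeCoeff u S ≠ 0 → S ⊆ V) (S : Finset σ)
    (hS : sqfreeCoeff (u * (restrictVars Y u)⁻¹) S ≠ 0) :
    (S ∩ Y).card ≤ r * (S \ Y).card := by
  have h0' : MvPowerSeries.constantCoeff (restrictVars Y u) ≠ 0 := by
    rwa [constantCoeff_restrictVars]
  have hV' : ∀ S, sqfreeCoeff (restrictVars Y u) S ≠ 0 → S ⊆ V := by
    intro S h
    rw [sqfreeCoeff_restrictVars] at h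
    exact hV S (by aesop)
  by_cases hSY : S ⊆ Y
  · have : sqfreeCoeff (u * (restrictVars Y u)⁻¹) S
        = sqfreeCoeff (restrictVars Y u * (restrictVars Y u)⁻¹) S := by
      rw [sqfreeCoeff_mul, sqfreeCoeff_mul]
      refine Finset.sum_congr rfl fun T hT => ?_
      rw [sqfreeCoeff_restrictVars, if_pos ((Finset.mem_powerset.mp hT).trans hSY)]
    rw [this, MvPowerSeries.mul_inv_cancel _ h0', sqfreeCoeff_one] at hS
    have hS0 : S = ∅ := by by_contra hc; simp [hc] at hS
    simp [hS0]
  · have hSV : S ⊆ V := by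
      rw [sqfreeCoeff_mul] at hS
      obtain ⟨T, hT, hne⟩ := Finset.exists_ne_zero_of_sum_ne_zero hS
      have h1 : T ⊆ V := hV T (left_ne_zero_of_mul hne)
      have h2 : S \ T ⊆ V := by
        by_contra hc
        exact right_ne_zero_of_mul hne (sqfreeCoeff_inv_eq_zero h0' hV' _ hc)
      intro i hi
      by_cases hiT : i ∈ T
      · exact h1 hiT
      · exact h2 (Finset.mem_sdiff.mpr ⟨hi, hiT⟩)
    have h1 : 1 ≤ (S \ Y).card := by
      rw [Nat.one_le_iff_ne_zero, Finset.card_ne_zero, Finset.sdiff_nonempty]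
      exact hSY
    calc (S ∩ Y).card ≤ V.card := Finset.card_le_card (Finset.inter_subset_left.trans hSV)
      _ ≤ r * 1 := by omega
      _ ≤ _ := Nat.mul_le_mul_left _ h1

lemma card_inter_le_of_prod {ι : Type*} (s : Finset ι) (w : ι → MvPowerSeries σ F)
    (Y : Finset σ) (r : ℕ)
    (hw : ∀ j ∈ s, ∀ S, sqfreeCoeff (w j) S ≠ 0 → (S ∩ Y).card ≤ r * (S \ Y).card) :
    ∀ S, sqfreeCoeff (∏ j ∈ s, w j) S ≠ 0 → (S ∩ Y).card ≤ r * (S \ Y).card := by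
  refine Finset.prod_induction w
    (fun φ => ∀ S, sqfreeCoeff φ S ≠ 0 → (S ∩ Y).card ≤ r * (S \ Y).card) ?_ ?_ hw
  · intro a b ha hb S hS
    rw [sqfreeCoeff_mul] at hS
    obtain ⟨T, hT, hne⟩ := Finset.exists_ne_zero_of_sum_ne_zero hS
    have hT := Finset.mem_powerset.mp hT
    have h1 := ha T (left_ne_zero_of_mul hne)
    have h2 := hb (S \ T) (right_ne_zero_of_mul hne)
    have e1 : (S ∩ Y).card = (T ∩ Y).card + ((S \ T) ∩ Y).card := by
      rw [← Finset.card_union_of_disjoint]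
      · congr 1
        ext i
        have := @hT i
        simp only [Finset.mem_inter, Finset.mem_union, Finset.mem_sdiff]
        tauto
      · rw [Finset.disjoint_left]
        simp only [Finset.mem_inter, Finset.mem_sdiff]
        tauto
    have e2 : (S \ Y).card = (T \ Y).card + ((S \ T) \ Y).card := by
      rw [← Finset.card_union_of_disjoint]
      · congr 1
        ext i
        have := @hT i
        simp only [Finset.mem_union, Finset.mem_sdiff]
        tauto
      · rw [Finset.disjoint_left]
        simp only [Finset.mem_sdiff]
        tauto
    rw [e1, e2, mul_add]
    omega
  · intro S hS
    rw [sqfreeCoeff_one] at hS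
    have hS0 : S = ∅ := by by_contra hc; simp [hc] at hS
    simp [hS0]

lemma subset_of_sqfreeCoeff_prod {ι : Type*} (s : Finset ι) (w : ι → MvPowerSeries σ F)
    (Y : Finset σ) (hw : ∀ j ∈ s, ∀ S, sqfreeCoeff (w j) S ≠ 0 → S ⊆ Y) :
    ∀ S, sqfreeCoeff (∏ j ∈ s, w j) S ≠ 0 → S ⊆ Y := by
  refine Finset.prod_induction w (fun φ => ∀ S, sqfreeCoeff φ S ≠ 0 → S ⊆ Y) ?_ ?_ hw
  · intro a b ha hb S hS
    rw [sqfreeCoeff_mul] at hS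
    obtain ⟨T, hT, hne⟩ := Finset.exists_ne_zero_of_sum_ne_zero hS
    intro i hi
    by_cases hiT : i ∈ T
    · exact ha T (left_ne_zero_of_mul hne) hiT
    · exact hb (S \ T) (right_ne_zero_of_mul hne) (Finset.mem_sdiff.mpr ⟨hi, hiT⟩)
  · intro S hS
    rw [sqfreeCoeff_one] at hS
    have hS0 : S = ∅ := by by_contra hc; simp [hc] at hS
    simp [hS0]

/-- The projected shifted partial derivatives of a product of power series in at most `r`
variables, with non-zero constant terms, lie in the span of a family indexed by the subsets of
`Y` of size at most `ℓ + r * k`. -/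
theorem exists_shifted_partials_expansion {ι : Type*} (s : Finset ι) (u : ι → MvPowerSeries σ F)
    (Y : Finset σ) (r k ℓ : ℕ) (V : ι → Finset σ) (hr : ∀ j ∈ s, (V j).card ≤ r)
    (h0 : ∀ j ∈ s, MvPowerSeries.constantCoeff (u j) ≠ 0)
    (hV : ∀ j ∈ s, ∀ S, sqfreeCoeff (u j) S ≠ 0 → S ⊆ V j) :
    ∃ (a : Finset σ → Finset σ → Finset σ → F) (v : Finset σ → Finset σ → F),
      ∀ B, Disjoint B Y → B.card = k → ∀ L, L.card ≤ ℓ → L ⊆ Y → ∀ K ⊆ Y,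
        (if L ⊆ K then sqfreeCoeff (∏ j ∈ s, u j) (B ∪ K \ L) else 0)
          = ∑ H ∈ Y.powerset with H.card ≤ ℓ + r * k, a B L H * v H K := by
  classical
  set G := ∏ j ∈ s, restrictVars Y (u j) with hG
  set W := ∏ j ∈ s, (u j * (restrictVars Y (u j))⁻¹) with hW
  have hGW : ∏ j ∈ s, u j = G * W := by
    rw [hG, hW, ← Finset.prod_mul_distrib]
    refine Finset.prod_congr rfl fun j hj => ?_
    rw [mul_left_comm, MvPowerSeries.mul_inv_cancel, mul_one]
    rw [constantCoeff_restrictVars]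
    exact h0 j hj
  have hGY : ∀ S, sqfreeCoeff G S ≠ 0 → S ⊆ Y := by
    refine subset_of_sqfreeCoeff_prod s _ Y fun j _ S hS => ?_
    rw [sqfreeCoeff_restrictVars] at hS
    by_contra hc
    simp [hc] at hS
  have hWr := card_inter_le_of_prod s (fun j => u j * (restrictVars Y (u j))⁻¹) Y r
    fun j hj S hS => card_inter_le_of_sqfreeCoeff_ne_zero Y (hr j hj) (h0 j hj) (hV j hj) S hS
  refine ⟨fun B L H => if L ⊆ H then sqfreeCoeff W (B ∪ H \ L) else 0,
    fun H K => if H ⊆ K then sqfreeCoeff G (K \ H) else 0, ?_⟩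
  intro B hB hBk L hL hLY K hK
  have hBd : ∀ i ∈ B, i ∉ Y := fun i hi => Finset.disjoint_left.mp hB hi
  split_ifs with hLK
  · rw [hGW, sqfreeCoeff_mul]
    have hsub : (K \ L).powerset ⊆ (B ∪ K \ L).powerset :=
      Finset.powerset_mono.mpr Finset.subset_union_right
    rw [← Finset.sum_subset hsub]
    · have e : ∑ H ∈ Y.powerset with H.card ≤ ℓ + r * k,
          (if L ⊆ H then sqfreeCoeff W (B ∪ H \ L) else 0)
            * (if H ⊆ K then sqfreeCoeff G (K \ H) else 0)
          = ∑ H ∈ Y.powerset with L ⊆ H ∧ H ⊆ K,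
            sqfreeCoeff W (B ∪ H \ L) * sqfreeCoeff G (K \ H) := by
        rw [Finset.sum_filter, Finset.sum_filter]
        refine Finset.sum_congr rfl fun H hH => ?_
        have hHY := Finset.mem_powerset.mp hH
        by_cases h1 : L ⊆ H <;> by_cases h2 : H ⊆ K <;> simp only [h1, h2, if_true, if_false,
          and_true, and_false, mul_zero, zero_mul, ite_self]
        by_cases h3 : sqfreeCoeff W (B ∪ H \ L) = 0
        · simp [h3]
        · rw [if_pos]
          have h4 := hWr _ h3
          have e1 : (B ∪ H \ L) ∩ Y = H \ L := by
            ext i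
            have := hBd i
            have := @hHY i
            simp only [Finset.mem_inter, Finset.mem_union, Finset.mem_sdiff]
            tauto
          have e2 : (B ∪ H \ L) \ Y = B := by
            ext i
            have := hBd i
            have := @hHY i
            simp only [Finset.mem_union, Finset.mem_sdiff]
            tauto
          rw [e1, e2, hBk, Finset.card_sdiff_of_subset h1] at h4
          omega
      rw [e]
      refine Finset.sum_bij' (fun T _ => K \ T) (fun H _ => K \ H) ?_ ?_ ?_ ?_ ?_
      · intro T hT
        rw [Finset.mem_powerset] at hT
        simp only [Finset.mem_filter, Finset.mem_powerset]
        refine ⟨Finset.sdiff_subset.trans hK, fun i hi => ?_, Finset.sdiff_subset⟩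
        rw [Finset.mem_sdiff]
        exact ⟨hLK hi, fun hiT => (Finset.mem_sdiff.mp (hT hiT)).2 hi⟩
      · intro H hH
        simp only [Finset.mem_filter, Finset.mem_powerset] at hH ⊢
        exact Finset.sdiff_subset_sdiff subset_rfl hH.2.1
      · intro T hT
        rw [Finset.mem_powerset] at hT
        exact Finset.sdiff_sdiff_eq_self (hT.trans Finset.sdiff_subset)
      · intro H hH
        simp only [Finset.mem_filter] at hH
        exact Finset.sdiff_sdiff_eq_self hH.2.2
      · intro T hT
        rw [Finset.mem_powerset] at hT
        have e1 : K \ (K \ T) = T := Finset.sdiff_sdiff_eq_self (hT.trans Finset.sdiff_subset)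
        have e2 : (B ∪ K \ L) \ T = B ∪ (K \ T) \ L := by
          ext i
          have := hBd i
          have := @hT i
          have := @hK i
          simp only [Finset.mem_union, Finset.mem_sdiff] at *
          tauto
        rw [e1, e2, mul_comm]
    · intro T hT hT'
      rw [Finset.mem_powerset] at hT hT'
      by_cases hc : sqfreeCoeff G T = 0
      · rw [hc, zero_mul]
      · refine absurd (fun i hi => ?_) hT'
        have h1 := hGY T hc hi
        rcases Finset.mem_union.mp (hT hi) with h | h
        · exact absurd h1 (hBd i h)
        · exact h
  · symm
    refine Finset.sum_eq_zero fun H _ => ?_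
    by_cases h1 : L ⊆ H <;> by_cases h2 : H ⊆ K <;> simp [h1, h2]
    exact absurd (h1.trans h2) hLK

end Algebra

/-- The graph of a function `Fin n → Fin m`. -/
def funGraph {n m : ℕ} (a : Fin n → Fin m) : Finset (Fin n × Fin m) :=
  Finset.univ.image fun i => (i, a i)

lemma mem_funGraph {n m : ℕ} (a : Fin n → Fin m) (z : Fin n × Fin m) :
    z ∈ funGraph a ↔ a z.1 = z.2 := by
  simp [funGraph, Prod.ext_iff]

lemma funGraph_injective {n m : ℕ} :
    Function.Injective (funGraph : (Fin n → Fin m) → Finset (Fin n × Fin m)) := by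
  intro a b h
  funext i
  have h1 : (i, b i) ∈ funGraph a := by rw [h, mem_funGraph]
  exact (mem_funGraph _ _).mp h1

section Substitution

variable {F J : Type*} [Field F] [DecidableEq J] {n m : ℕ}

/-- The substitution `X_{i,j} ↦ c_{i,j} + ∑_{a : s(i,a) = j} z_{i,a}`. -/
noncomputable def liftVars (s : Fin n × Fin m → J) (c : Fin n × J → F) :
    MvPolynomial (Fin n × J) F →ₐ[F] MvPolynomial (Fin n × Fin m) F :=
  aeval fun p => C (c p) + ∑ a : Fin m with s (p.1, a) = p.2, X (p.1, a)

lemma constantCoeff_liftVars (s : Fin n × Fin m → J) (c : Fin n × J → F)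
    (Q : MvPolynomial (Fin n × J) F) :
    constantCoeff (liftVars s c Q) = eval c Q := by
  have : (constantCoeff (σ := Fin n × Fin m)).comp (liftVars s c).toRingHom
      = eval (R := F) c := by
    apply MvPolynomial.ringHom_ext
    · intro r
      simp [liftVars]
    · intro p
      simp [liftVars]
  exact DFunLike.congr_fun this Q

lemma vars_liftVars_subset (s : Fin n × Fin m → J) (c : Fin n × J → F)
    (Q : MvPolynomial (Fin n × J) F) :
    (liftVars s c Q).vars ⊆ Finset.univ.filter fun z => (z.1, s z) ∈ Q.vars := by
  classical
  intro z hz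
  have h1 := MvPolynomial.vars_bind₁
    (fun p : Fin n × J => C (c p) + ∑ a : Fin m with s (p.1, a) = p.2, X (p.1, a)) Q hz
  rw [Finset.mem_biUnion] at h1
  obtain ⟨p, hp, hz⟩ := h1
  have h2 := MvPolynomial.vars_add_subset _ _ hz
  rw [vars_C, Finset.empty_union] at h2
  have h3 := MvPolynomial.vars_sum_subset _ _ h2
  rw [Finset.mem_biUnion] at h3
  obtain ⟨a, ha, h4⟩ := h3
  rw [vars_X, Finset.mem_singleton] at h4
  rw [Finset.mem_filter] at ha ⊢
  subst h4
  refine ⟨Finset.mem_univ _, ?_⟩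
  rw [ha.2]
  exact hp

lemma subset_vars_of_sqfreeCoeff_ne_zero {σ : Type*} [DecidableEq σ] (p : MvPolynomial σ F)
    (S : Finset σ) (h : sqfreeCoeff (p : MvPowerSeries σ F) S ≠ 0) : S ⊆ p.vars := by
  intro i hi
  rw [MvPolynomial.mem_vars_iff_mem_support]
  refine ⟨sqfreeExp S, ?_, ?_⟩
  · rw [MvPolynomial.mem_support_iff]
    rwa [sqfreeCoeff, MvPolynomial.coeff_coe] at h
  · rwa [support_sqfreeExp]

lemma sum_support_sqfreeExp {σ : Type*} [DecidableEq σ] (S : Finset σ) :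
    ∑ i ∈ (sqfreeExp S).support, sqfreeExp S i = S.card := by
  rw [support_sqfreeExp, Finset.card_eq_sum_ones]
  exact Finset.sum_congr rfl fun i hi => by rw [sqfreeExp_apply, if_pos hi]

lemma coeff_liftVars_prod_X (s : Fin n × Fin m → J) (c : Fin n × J → F) (f : Fin n → J)
    (S : Finset (Fin n × Fin m)) (hS : S.card = n) :
    coeff (sqfreeExp S) (liftVars s c (∏ i, X (i, f i)))
      = if ∃ a, S = funGraph a ∧ ∀ i, s (i, a i) = f i then 1 else 0 := by
  have e1 : liftVars s c (∏ i, X (i, f i))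
      = ∏ i, (C (c (i, f i)) + ∑ a : Fin m with s (i, a) = f i, X (i, a)) := by
    simp [liftVars, map_prod]
  rw [e1, Finset.prod_add, coeff_sum, Finset.sum_eq_single ∅]
  · rw [Finset.prod_empty, one_mul, Finset.sdiff_empty, Finset.prod_univ_sum, coeff_sum]
    have e2 : ∀ a : Fin n → Fin m, (∏ i, X (i, a i) : MvPolynomial (Fin n × Fin m) F)
        = monomial (sqfreeExp (funGraph a)) 1 := by
      intro a
      rw [sqfreeExp, funGraph, Finset.sum_image (fun i _ j _ h => (Prod.ext_iff.mp h).1),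
        MvPolynomial.monomial_sum_one]
      rfl
    simp only [e2, coeff_monomial, sqfreeExp_injective.eq_iff]
    split_ifs with h
    · obtain ⟨a, rfl, ha⟩ := h
      simp only [funGraph_injective.eq_iff]
      rw [Finset.sum_ite_eq', if_pos]
      simpa using ha
    · refine Finset.sum_eq_zero fun a ha => if_neg fun hc => h ⟨a, hc.symm, ?_⟩
      simpa using ha
  · intro t _ ht
    apply coeff_eq_zero_of_totalDegree_lt
    have hl : ∀ i, (∑ a : Fin m with s (i, a) = f i,
        (X (i, a) : MvPolynomial (Fin n × Fin m) F)).totalDegree ≤ 1 := by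
      intro i
      refine (totalDegree_finsetSum _ _).trans (Finset.sup_le fun a _ => ?_)
      rw [totalDegree_X]
    have h1 : (∏ i ∈ t, (C (c (i, f i)) : MvPolynomial (Fin n × Fin m) F)).totalDegree ≤ 0 := by
      refine (totalDegree_finsetProd _ _).trans ?_
      simp
    have h2 : (∏ i ∈ Finset.univ \ t, ∑ a : Fin m with s (i, a) = f i,
        (X (i, a) : MvPolynomial (Fin n × Fin m) F)).totalDegree ≤ (Finset.univ \ t).card := by
      refine (totalDegree_finsetProd _ _).trans ((Finset.sum_le_sum fun i _ => hl i).trans ?_)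
      simp
    have h3 : (Finset.univ \ t).card + t.card = n := by
      rw [Finset.card_sdiff_add_card_eq_card (Finset.subset_univ t), Finset.card_univ,
        Fintype.card_fin]
    have h4 : 0 < t.card := Finset.card_pos.mpr (Finset.nonempty_iff_ne_empty.mpr ht)
    have h5 := totalDegree_mul (∏ i ∈ t, (C (c (i, f i)) : MvPolynomial (Fin n × Fin m) F))
      (∏ i ∈ Finset.univ \ t, ∑ a : Fin m with s (i, a) = f i, X (i, a))
    rw [sum_support_sqfreeExp]
    omega
  · intro h
    exact absurd (Finset.empty_mem_powerset _) h

lemma sqfreeCoeff_liftVars_sum_ne_zero_iff [CharZero F] {ι : Type*} [Fintype ι]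
    (s : Fin n × Fin m → J) (c : Fin n × J → F) (f : ι → Fin n → J)
    (S : Finset (Fin n × Fin m)) (hS : S.card = n) :
    sqfreeCoeff (liftVars s c (∑ x, ∏ i, X (i, f x i)) : MvPowerSeries (Fin n × Fin m) F) S ≠ 0
      ↔ ∃ x a, S = funGraph a ∧ ∀ i, s (i, a i) = f x i := by
  classical
  rw [sqfreeCoeff, MvPolynomial.coeff_coe, map_sum, coeff_sum]
  simp only [coeff_liftVars_prod_X s c _ S hS]
  rw [Finset.sum_boole, Nat.cast_ne_zero, Finset.card_ne_zero]
  constructor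
  · rintro ⟨x, hx⟩
    exact ⟨x, (Finset.mem_filter.mp hx).2⟩
  · rintro ⟨x, hx⟩
    exact ⟨x, Finset.mem_filter.mpr ⟨Finset.mem_univ _, hx⟩⟩

end Substitution

section Rank

variable {F J : Type*} [Field F] [DecidableEq J] {n m : ℕ}

lemma exists_eval_ne_zero_of_ne_zero [Infinite F] {σ ι : Type*} (s : Finset ι)
    (Q : ι → MvPolynomial σ F) : ∃ c : σ → F, ∀ j ∈ s, Q j ≠ 0 → eval c (Q j) ≠ 0 := by
  classical
  have h : (∏ j ∈ s with Q j ≠ 0, Q j) ≠ 0 :=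
    Finset.prod_ne_zero_iff.mpr fun j hj => (Finset.mem_filter.mp hj).2
  by_contra! hc
  refine h (MvPolynomial.funext fun c => ?_)
  obtain ⟨j, hj, hj0, hj1⟩ := hc c
  rw [map_prod, map_zero]
  exact Finset.prod_eq_zero (Finset.mem_filter.mpr ⟨hj, hj0⟩) hj1

/-- The words `a` for which `s (·, a ·)` is one of the words `f x`. -/
noncomputable def wordCode {ι : Type*} (f : ι → Fin n → J) (s : Fin n × Fin m → J) :
    Finset (Fin n → Fin m) :=
  open Classical in Finset.univ.filter fun a => ∃ x, ∀ i, s (i, a i) = f x i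

lemma mem_wordCode {ι J : Type*} (f : ι → Fin n → J) (s : Fin n × Fin m → J) (a : Fin n → Fin m) :
    a ∈ wordCode f s ↔ ∃ x, ∀ i, s (i, a i) = f x i := by
  simp [wordCode]

/-- The positions with first coordinate at least `k`. -/
def tailVars (n m k : ℕ) : Finset (Fin n × Fin m) :=
  Finset.univ.filter fun z => k ≤ (z.1 : ℕ)

lemma mem_tailVars {k : ℕ} (z : Fin n × Fin m) : z ∈ tailVars n m k ↔ k ≤ (z.1 : ℕ) := by
  simp [tailVars]

lemma card_funGraph (a : Fin n → Fin m) : (funGraph a).card = n := by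
  rw [funGraph, Finset.card_image_of_injective _ (fun i j h => (Prod.ext_iff.mp h).1),
    Finset.card_univ, Fintype.card_fin]

lemma card_funGraph_sdiff_tailVars {k : ℕ} (hk : k ≤ n) (a : Fin n → Fin m) :
    (funGraph a \ tailVars n m k).card = k := by
  have : funGraph a \ tailVars n m k
      = (Finset.univ : Finset (Fin k)).image
        fun i => (Fin.castLE hk i, a (Fin.castLE hk i)) := by
    ext z
    simp only [Finset.mem_sdiff, mem_funGraph, mem_tailVars, not_le, Finset.mem_image,
      Finset.mem_univ, true_and]
    constructor
    · rintro ⟨h1, h2⟩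
      exact ⟨⟨z.1, h2⟩, Prod.ext rfl h1⟩
    · rintro ⟨i, rfl⟩
      exact ⟨rfl, i.2⟩
  rw [this, Finset.card_image_of_injective, Finset.card_univ, Fintype.card_fin]
  intro i j h
  exact Fin.castLE_injective hk (Prod.ext_iff.mp h).1

lemma card_funGraph_inter_tailVars {k : ℕ} (hk : k ≤ n) (a : Fin n → Fin m) :
    (funGraph a ∩ tailVars n m k).card = n - k := by
  have h1 := Finset.card_sdiff_add_card_inter (funGraph a) (tailVars n m k)
  rw [card_funGraph_sdiff_tailVars hk, card_funGraph] at h1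
  omega

/-- The sets `K` that contain exactly one tail of a word of the code, with no other word of the
code with the same head whose tail avoids the rest of `K`. -/
def IsIsolating (A : Finset (Fin n → Fin m)) (k : ℕ) (K : Finset (Fin n × Fin m)) : Prop :=
  ∃ a ∈ A, funGraph a ∩ tailVars n m k ⊆ K ∧
    ∀ b ∈ A, b ≠ a → (∀ i : Fin n, (i : ℕ) < k → b i = a i) →
      ¬ Disjoint (K \ (funGraph a ∩ tailVars n m k)) (funGraph b ∩ tailVars n m k)

/-- The number of isolating sets bounds from below the top fan-in of any representation by
sums of products of polynomials in few variables. -/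
theorem card_isolating_le [CharZero F] {ι : Type*} [Fintype ι] (f : ι → Fin n → J)
    {T d : ℕ} (Q : Fin T → Fin d → MvPolynomial (Fin n × J) F)
    (hQ : ∑ x, ∏ i, (X (i, f x i) : MvPolynomial (Fin n × J) F) = ∑ i, ∏ j, Q i j)
    (s : Fin n × Fin m → J) (r k ℓ : ℕ) (hk : k ≤ n)
    (hs : ∀ i j, (Finset.univ.filter fun z : Fin n × Fin m => (z.1, s z) ∈ (Q i j).vars).card ≤ r)
    (𝒦 : Finset (Finset (Fin n × Fin m)))
    (h𝒦 : ∀ K ∈ 𝒦, K ⊆ tailVars n m k ∧ K.card = ℓ + (n - k) ∧ IsIsolating (wordCode f s) k K) :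
    𝒦.card ≤ T * ((tailVars n m k).powerset.filter fun H => H.card ≤ ℓ + r * k).card := by
  classical
  set Y := tailVars n m k with hY
  set Hs := Y.powerset.filter fun H => H.card ≤ ℓ + r * k with hHs
  obtain ⟨c, hc⟩ := exists_eval_ne_zero_of_ne_zero Finset.univ
    (fun p : Fin T × Fin d => Q p.1 p.2)
  have key : ∀ i, ∃ (a : Finset (Fin n × Fin m) → Finset (Fin n × Fin m) →
      Finset (Fin n × Fin m) → F) (v : Finset (Fin n × Fin m) → Finset (Fin n × Fin m) → F),
      ∀ B, Disjoint B Y → B.card = k → ∀ L, L.card ≤ ℓ → L ⊆ Y → ∀ K ⊆ Y,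
        (if L ⊆ K then sqfreeCoeff (∏ j, (liftVars s c (Q i j) :
            MvPowerSeries (Fin n × Fin m) F)) (B ∪ K \ L) else 0)
          = ∑ H ∈ Hs, a B L H * v H K := by
    intro i
    by_cases hz : ∃ j, Q i j = 0
    · obtain ⟨j, hj⟩ := hz
      refine ⟨0, 0, fun B _ _ L _ _ K _ => ?_⟩
      rw [Finset.prod_eq_zero (Finset.mem_univ j)]
      · simp [sqfreeCoeff]
      · rw [hj, map_zero, MvPolynomial.coe_zero]
    · push Not at hz
      refine exists_shifted_partials_expansion Finset.univ _ Y r k ℓ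
        (fun j => (liftVars s c (Q i j)).vars) ?_ ?_ ?_
      · intro j _
        exact (Finset.card_le_card (vars_liftVars_subset s c (Q i j))).trans (hs i j)
      · intro j _
        have h1 : MvPowerSeries.constantCoeff
            (liftVars s c (Q i j) : MvPowerSeries (Fin n × Fin m) F)
            = constantCoeff (liftVars s c (Q i j)) := by
          rw [← MvPowerSeries.coeff_zero_eq_constantCoeff_apply, MvPolynomial.coeff_coe,
            MvPolynomial.constantCoeff_eq]
        rw [h1, constantCoeff_liftVars]
        exact hc (i, j) (Finset.mem_univ _) (hz j)
      · intro j _ S hS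
        exact subset_vars_of_sqfreeCoeff_ne_zero _ S hS
  choose a v hav using key
  have hsum : ∀ S, sqfreeCoeff (liftVars s c (∑ x, ∏ i, X (i, f x i)) :
      MvPowerSeries (Fin n × Fin m) F) S
      = ∑ i, sqfreeCoeff (∏ j, (liftVars s c (Q i j) : MvPowerSeries (Fin n × Fin m) F)) S := by
    intro S
    rw [hQ]
    simp only [sqfreeCoeff, map_sum, map_prod, MvPolynomial.coeff_coe, coeff_sum]
    refine Finset.sum_congr rfl fun i _ => ?_
    rw [← MvPolynomial.coeff_coe]
    congr 1
    exact map_prod (MvPolynomial.coeToMvPowerSeries.ringHom (σ := Fin n × Fin m) (R := F)) _ _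
  set w : Fin T × Hs → (𝒦 → F) := fun p K => v p.1 p.2 K with hw
  have hspan : Submodule.span F (Set.range w) = ⊤ := by
    rw [eq_top_iff, ← (Pi.basisFun F 𝒦).span_eq, Submodule.span_le]
    rintro _ ⟨K, rfl⟩
    obtain ⟨hKY, hKc, x, hx, hxK, hiso⟩ := h𝒦 K K.2
    set B := funGraph x \ Y
    set L := (K : Finset (Fin n × Fin m)) \ (funGraph x ∩ Y) with hL
    have hBd : Disjoint B Y := Finset.sdiff_disjoint
    have hBc : B.card = k := card_funGraph_sdiff_tailVars hk x
    have hxc : (funGraph x ∩ Y).card = n - k := card_funGraph_inter_tailVars hk x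
    have hLc : L.card = ℓ := by
      rw [hL, Finset.card_sdiff_of_subset hxK, hxc, hKc]
      omega
    have hLY : L ⊆ Y := Finset.sdiff_subset.trans hKY
    set row : 𝒦 → F := fun K' => if L ⊆ K' then sqfreeCoeff (liftVars s c
      (∑ x, ∏ i, X (i, f x i)) : MvPowerSeries (Fin n × Fin m) F) (B ∪ K' \ L) else 0 with hrow
    have hrow_mem : row ∈ Submodule.span F (Set.range w) := by
      have : row = ∑ p : Fin T × Hs, a p.1 B L p.2 • w p := by
        funext K'
        rw [Finset.sum_apply, Fintype.sum_prod_type]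
        have h1 : row K' = ∑ i, (if L ⊆ K' then sqfreeCoeff (∏ j, (liftVars s c (Q i j) :
            MvPowerSeries (Fin n × Fin m) F)) (B ∪ K' \ L) else 0) := by
          simp only [hrow]
          split_ifs
          · exact hsum _
          · simp
        rw [h1]
        refine Finset.sum_congr rfl fun i _ => ?_
        rw [hav i B hBd hBc L hLc.le hLY K' (h𝒦 K' K'.2).1]
        rw [← Finset.sum_coe_sort Hs]
        rfl
      rw [this]
      exact Submodule.sum_mem _ fun p _ =>
        Submodule.smul_mem _ _ (Submodule.subset_span ⟨p, rfl⟩)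
    have hcard : ∀ K' : 𝒦, L ⊆ K' → (B ∪ (K' : Finset (Fin n × Fin m)) \ L).card = n := by
      intro K' hK'
      have h1 : Disjoint B ((K' : Finset (Fin n × Fin m)) \ L) :=
        hBd.mono_right (Finset.sdiff_subset.trans (h𝒦 K' K'.2).1)
      rw [Finset.card_union_of_disjoint h1, hBc, Finset.card_sdiff_of_subset hK', hLc,
        (h𝒦 K' K'.2).2.1]
      omega
    have hrowK : row K ≠ 0 := by
      have h1 : L ⊆ K := Finset.sdiff_subset
      simp only [hrow]
      rw [if_pos h1, sqfreeCoeff_liftVars_sum_ne_zero_iff s c f _ (hcard K h1)]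
      obtain ⟨y, hy⟩ := (mem_wordCode f s x).mp hx
      refine ⟨y, x, ?_, hy⟩
      rw [hL, Finset.sdiff_sdiff_eq_self hxK]
      exact Finset.sdiff_union_inter _ _
    have hrow0 : ∀ K', K' ≠ K → row K' = 0 := by
      intro K' hne
      by_contra h0
      simp only [hrow] at h0
      have h1 : L ⊆ K' := by
        by_contra h
        simp [h] at h0
      rw [if_pos h1] at h0
      obtain ⟨y, b, hb, hyb⟩ :=
        (sqfreeCoeff_liftVars_sum_ne_zero_iff s c f _ (hcard K' h1)).mp h0
      have hbA : b ∈ wordCode f s := (mem_wordCode f s b).mpr ⟨y, hyb⟩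
      have hK'Y := (h𝒦 K' K'.2).1
      have hbt : funGraph b ∩ Y = (K' : Finset (Fin n × Fin m)) \ L := by
        rw [← hb]
        ext z
        have h2 := @hK'Y z
        have h3 : z ∈ B → z ∉ Y := fun h => Finset.disjoint_left.mp hBd h
        simp only [Finset.mem_inter, Finset.mem_union, Finset.mem_sdiff]
        tauto
      have hbh : ∀ i : Fin n, (i : ℕ) < k → b i = x i := by
        intro i hi
        have h2 : (i, x i) ∈ B :=
          Finset.mem_sdiff.mpr ⟨(mem_funGraph _ _).mpr rfl, by rw [hY, mem_tailVars]; simpa using hi⟩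
        have h3 : (i, x i) ∈ funGraph b := by
          rw [← hb]; exact Finset.mem_union_left _ h2
        exact (mem_funGraph _ _).mp h3
      by_cases hbx : b = x
      · apply hne
        apply Subtype.ext
        have h2 : (K' : Finset (Fin n × Fin m)) = L ∪ (K' : Finset (Fin n × Fin m)) \ L :=
          (Finset.union_sdiff_of_subset h1).symm
        rw [h2, ← hbt, hbx, hL, Finset.sdiff_union_of_subset hxK]
      · exact hiso b hbA hbx hbh (by rw [hbt]; exact Finset.disjoint_sdiff)
    have hsingle : Pi.basisFun F 𝒦 K = (row K)⁻¹ • row := by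
      funext K'
      rw [Pi.basisFun_apply, Pi.smul_apply, smul_eq_mul]
      by_cases h : K' = K
      · rw [h, inv_mul_cancel₀ hrowK, Pi.single_eq_same]
      · rw [hrow0 K' h, mul_zero, Pi.single_eq_of_ne h]
    rw [hsingle]
    exact Submodule.smul_mem _ _ hrow_mem
  have h1 := finrank_range_le_card (R := F) w
  rw [Set.finrank, hspan, finrank_top, Module.finrank_fintype_fun_eq_card, Fintype.card_prod,
    Fintype.card_fin, Fintype.card_coe, Fintype.card_coe] at h1
  exact h1

end Rank

lemma choose_sub_mul_pow_le (R l e : ℕ) (hl : l ≤ R) :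
    (R - e).choose l * R ^ e ≤ R.choose l * (R - l) ^ e := by
  induction e with
  | zero => simp
  | succ e ih =>
    rcases Nat.lt_or_ge e R with he | he
    · obtain ⟨c, hc⟩ : ∃ c, R - e = c + 1 := ⟨R - e - 1, by omega⟩
      have h1 := Nat.choose_mul_succ_eq c l
      rw [hc] at ih
      have hc' : R - (e + 1) = c := by omega
      rw [hc']
      have h2 : (c + 1 - l) * R ≤ (c + 1) * (R - l) := by
        rcases Nat.lt_or_ge (c + 1) l with h | h
        · rw [Nat.sub_eq_zero_of_le h.le]; simp
        · obtain ⟨u, rfl⟩ := Nat.exists_eq_add_of_le hl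
          obtain ⟨v, hv⟩ := Nat.exists_eq_add_of_le h
          rw [hv]
          simp only [Nat.add_sub_cancel_left]
          have : v ≤ u := by omega
          nlinarith
      refine le_of_mul_le_mul_left (a := c + 1) ?_ (Nat.succ_pos _)
      calc (c + 1) * (c.choose l * R ^ (e + 1)) = (c.choose l * (c + 1)) * R ^ (e + 1) := by ring
        _ = ((c + 1 - l) * R) * ((c + 1).choose l * R ^ e) := by rw [h1]; ring
        _ ≤ ((c + 1) * (R - l)) * (R.choose l * (R - l) ^ e) := Nat.mul_le_mul h2 ih
        _ = _ := by ring
    · have h0 : R - (e + 1) = R - e := by omega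
      rw [h0]
      have h0' : R - e = 0 := by omega
      rw [h0'] at ih ⊢
      rcases Nat.eq_zero_or_pos l with rfl | hl0
      · simp
      · rw [Nat.choose_eq_zero_of_lt hl0]; simp

lemma choose_sub_sub_mul_pow_le (R l e : ℕ) (hl : l ≤ R) (he : e ≤ l) :
    (R - e).choose (l - e) * R ^ e ≤ R.choose l * l ^ e := by
  induction e with
  | zero => simp
  | succ e ih =>
    have ih := ih (by omega)
    obtain ⟨c, hc⟩ : ∃ c, R - e = c + 1 := ⟨R - e - 1, by omega⟩
    obtain ⟨v, hv⟩ : ∃ v, l - e = v + 1 := ⟨l - e - 1, by omega⟩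
    have h1 := Nat.add_one_mul_choose_eq c v
    have hc' : R - (e + 1) = c := by omega
    have hv' : l - (e + 1) = v := by omega
    rw [hc, hv] at ih
    rw [hc', hv']
    have h2 : (v + 1) * R ≤ (c + 1) * l := by
      have hR : R = c + 1 + e := by omega
      have hl' : l = v + 1 + e := by omega
      rw [hR, hl']
      have : v ≤ c := by omega
      nlinarith
    refine le_of_mul_le_mul_left (a := c + 1) ?_ (Nat.succ_pos _)
    calc (c + 1) * (c.choose v * R ^ (e + 1)) = ((c + 1) * c.choose v) * R ^ (e + 1) := by ring
      _ = ((v + 1) * R) * ((c + 1).choose (v + 1) * R ^ e) := by rw [h1]; ring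
      _ ≤ ((c + 1) * l) * (R.choose l * l ^ e) := Nat.mul_le_mul h2 ih
      _ = _ := by ring

lemma choose_add_mul_pow_le (R l t : ℕ) (hl : l ≤ R) :
    (R + t).choose (l + t) * l ^ t ≤ R.choose l * R ^ t := by
  induction t with
  | zero => simp
  | succ t ih =>
    have h1 := Nat.add_one_mul_choose_eq (R + t) (l + t)
    have h2 : (R + t + 1) * l ≤ (l + t + 1) * R := by nlinarith
    refine le_of_mul_le_mul_left (a := l + t + 1) ?_ (Nat.succ_pos _)
    calc (l + t + 1) * ((R + (t + 1)).choose (l + (t + 1)) * l ^ (t + 1))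
        = ((R + t + 1).choose (l + t + 1) * (l + t + 1)) * l ^ (t + 1) := by
          rw [← add_assoc, ← add_assoc]; ring
      _ = ((R + t + 1) * l) * ((R + t).choose (l + t) * l ^ t) := by rw [← h1]; ring
      _ ≤ ((l + t + 1) * R) * (R.choose l * R ^ t) := Nat.mul_le_mul h2 ih
      _ = _ := by ring

lemma choose_mul_pow_le (M κ h : ℕ) (hκ : κ ≤ M) (j : ℕ) (hj : h + j = κ) :
    M.choose h * (M - κ) ^ j ≤ M.choose κ * κ ^ j := by
  induction j generalizing h with
  | zero => simp at hj; simp [hj]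
  | succ j ih =>
    have ih := ih (h + 1) (by omega)
    have h1 := Nat.choose_succ_right_eq M h
    have h2 : M - κ ≤ M - h := by omega
    calc M.choose h * (M - κ) ^ (j + 1) = (M.choose h * (M - κ)) * (M - κ) ^ j := by ring
      _ ≤ (M.choose h * (M - h)) * (M - κ) ^ j := by gcongr
      _ = (h + 1) * (M.choose (h + 1) * (M - κ) ^ j) := by rw [← h1]; ring
      _ ≤ κ * (M.choose κ * κ ^ j) := Nat.mul_le_mul (by omega) ih
      _ = _ := by ring

lemma card_filter_subset_disjoint {α : Type*} [DecidableEq α] (Y U V : Finset α) (κ : ℕ)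
    (hU : U ⊆ Y) (hV : V ⊆ Y) (hUV : Disjoint U V) (hκ : U.card ≤ κ) :
    ((Y.powersetCard κ).filter fun K => U ⊆ K ∧ Disjoint K V).card
      = (Y.card - U.card - V.card).choose (κ - U.card) := by
  have h1 : Y.card - U.card - V.card = (Y \ (U ∪ V)).card := by
    rw [Finset.card_sdiff_of_subset (Finset.union_subset hU hV),
      Finset.card_union_of_disjoint hUV]
    omega
  rw [h1, ← Finset.card_powersetCard]
  refine Finset.card_bij' (fun K _ => K \ U) (fun K _ => K ∪ U) ?_ ?_ ?_ ?_
  · intro K hK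
    simp only [Finset.mem_filter, Finset.mem_powersetCard] at hK ⊢
    obtain ⟨⟨hKY, hc⟩, hUK, hd⟩ := hK
    refine ⟨?_, by rw [Finset.card_sdiff_of_subset hUK, hc]⟩
    intro z hz
    simp only [Finset.mem_sdiff, Finset.mem_union] at hz ⊢
    refine ⟨hKY hz.1, ?_⟩
    rintro (h | h)
    · exact hz.2 h
    · exact Finset.disjoint_left.mp hd hz.1 h
  · intro K hK
    simp only [Finset.mem_filter, Finset.mem_powersetCard] at hK ⊢
    obtain ⟨hKY, hc⟩ := hK
    have hd : Disjoint K U := Finset.disjoint_left.mpr fun z hz h => by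
      have := hKY hz
      simp only [Finset.mem_sdiff, Finset.mem_union] at this
      exact this.2 (Or.inl h)
    refine ⟨⟨Finset.union_subset (hKY.trans Finset.sdiff_subset) hU, ?_⟩,
      Finset.subset_union_right, ?_⟩
    · rw [Finset.card_union_of_disjoint hd, hc]; omega
    · rw [Finset.disjoint_union_left]
      refine ⟨Finset.disjoint_left.mpr fun z hz h => ?_, hUV⟩
      have := hKY hz
      simp only [Finset.mem_sdiff, Finset.mem_union] at this
      exact this.2 (Or.inr h)
  · intro K hK
    simp only [Finset.mem_filter] at hK
    exact Finset.sdiff_union_of_subset hK.2.1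
  · intro K hK
    simp only [Finset.mem_powersetCard] at hK
    refine Finset.union_sdiff_cancel_right (Finset.disjoint_left.mpr fun z hz h => ?_)
    have := hK.1 hz
    simp only [Finset.mem_sdiff, Finset.mem_union] at this
    exact this.2 (Or.inl h)

lemma card_filter_subset {α : Type*} [DecidableEq α] (Y U : Finset α) (κ : ℕ)
    (hU : U ⊆ Y) (hκ : U.card ≤ κ) :
    ((Y.powersetCard κ).filter fun K => U ⊆ K).card = (Y.card - U.card).choose (κ - U.card) := by
  have := card_filter_subset_disjoint Y U ∅ κ hU (Finset.empty_subset _)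
    (Finset.disjoint_empty_right _) hκ
  simpa using this

lemma card_filter_subset_disjoint_le {α : Type*} [DecidableEq α] (Y U V : Finset α) (l : ℕ)
    (hU : U ⊆ Y) (hV : V ⊆ Y) (hUV : Disjoint U V) (hl : l < Y.card - U.card) :
    (((Y.powersetCard (l + U.card)).filter fun K => U ⊆ K ∧ Disjoint K V).card : ℝ)
      ≤ (Y.card - U.card).choose l * (1 - (l : ℝ) / (Y.card - U.card : ℕ)) ^ V.card := by
  rw [card_filter_subset_disjoint Y U V _ hU hV hUV (by omega), Nat.add_sub_cancel]
  set R := Y.card - U.card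
  have hR : (0 : ℝ) < R := by exact_mod_cast (by omega : 0 < R)
  have h := choose_sub_mul_pow_le R l V.card hl.le
  have e : (1 - (l : ℝ) / R) = (R - l : ℕ) / R := by
    rw [Nat.cast_sub hl.le]; field_simp
  rw [e, div_pow, ← mul_div_assoc, le_div_iff₀ (by positivity)]
  exact_mod_cast h

lemma card_filter_union_subset_le {α : Type*} [DecidableEq α] (Y U V : Finset α) (l : ℕ)
    (hU : U ⊆ Y) (hV : V ⊆ Y) (hUV : Disjoint U V) (hl : l < Y.card - U.card) :
    (((Y.powersetCard (l + U.card)).filter fun K => U ⊆ K ∧ V ⊆ K).card : ℝ)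
      ≤ (Y.card - U.card).choose l * ((l : ℝ) / (Y.card - U.card : ℕ)) ^ V.card := by
  set R := Y.card - U.card with hRdef
  have hR : (0 : ℝ) < R := by exact_mod_cast (by omega : 0 < R)
  simp only [← Finset.union_subset_iff]
  rcases Nat.lt_or_ge l V.card with h | h
  · have : ((Y.powersetCard (l + U.card)).filter fun K => U ∪ V ⊆ K) = ∅ := by
      refine Finset.filter_eq_empty_iff.mpr fun K hK hs => ?_
      have h1 := Finset.card_le_card hs
      rw [Finset.card_union_of_disjoint hUV, (Finset.mem_powersetCard.mp hK).2] at h1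
      omega
    rw [this]
    simp only [Finset.card_empty, Nat.cast_zero]
    positivity
  · rw [card_filter_subset Y _ _ (Finset.union_subset hU hV)
      (by rw [Finset.card_union_of_disjoint hUV]; omega), Finset.card_union_of_disjoint hUV]
    have e1 : Y.card - (U.card + V.card) = R - V.card := by omega
    have e2 : l + U.card - (U.card + V.card) = l - V.card := by omega
    rw [e1, e2, div_pow, ← mul_div_assoc, le_div_iff₀ (by positivity)]
    exact_mod_cast choose_sub_sub_mul_pow_le R l V.card hl.le h

/-- The part of the graph of `a` over the coordinates with index at least `k`. -/
def tailGraph {n m : ℕ} (k : ℕ) (a : Fin n → Fin m) : Finset (Fin n × Fin m) :=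
  funGraph a ∩ tailVars n m k

lemma pow_card_tailGraph_sdiff {n m : ℕ} (k : ℕ) (a b : Fin n → Fin m) (w : ℝ) :
    w ^ (tailGraph k b \ tailGraph k a).card
      = ∏ i : Fin n, if k ≤ (i : ℕ) ∧ b i ≠ a i then w else 1 := by
  have h : tailGraph k b \ tailGraph k a
      = (Finset.univ.filter fun i : Fin n => k ≤ (i : ℕ) ∧ b i ≠ a i).image
        fun i => (i, b i) := by
    ext ⟨i, x⟩
    simp only [tailGraph, Finset.mem_sdiff, Finset.mem_inter, mem_funGraph, mem_tailVars,
      Finset.mem_image, Finset.mem_filter, Finset.mem_univ, true_and, Prod.mk.injEq]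
    constructor
    · rintro ⟨⟨rfl, h2⟩, h3⟩
      exact ⟨i, ⟨h2, fun h => h3 ⟨h.symm, h2⟩⟩, rfl, rfl⟩
    · rintro ⟨j, ⟨h1, h2⟩, rfl, rfl⟩
      exact ⟨⟨rfl, h1⟩, fun h => h2 h.1.symm⟩
  rw [h, Finset.card_image_of_injective _ (fun i j h => (Prod.ext_iff.mp h).1),
    Finset.prod_ite]
  simp

lemma card_mul_le_card_isolating {n m : ℕ} (k κ : ℕ) (A : Finset (Fin n → Fin m))
    (G : Finset (Finset (Fin n × Fin m)))
    (hG : ∀ K ∈ (tailVars n m k).powersetCard κ, IsIsolating A k K → K ∈ G) :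
    (∑ a ∈ A, (((tailVars n m k).powersetCard κ).filter fun K => tailGraph k a ⊆ K).card : ℝ)
      - ∑ a ∈ A, ∑ b ∈ A.erase a,
        ((if ∀ i : Fin n, (i : ℕ) < k → b i = a i then
            ((((tailVars n m k).powersetCard κ).filter fun K => tailGraph k a ⊆ K ∧
              Disjoint K (tailGraph k b \ tailGraph k a)).card : ℝ) else 0)
          + (((tailVars n m k).powersetCard κ).filter fun K => tailGraph k a ⊆ K ∧
              tailGraph k b \ tailGraph k a ⊆ K).card) ≤ G.card := by
  set P := (tailVars n m k).powersetCard κ with hP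
  have key : ∀ K ∈ P, (∑ a ∈ A, if tailGraph k a ⊆ K then (1 : ℝ) else 0)
      - ∑ a ∈ A, ∑ b ∈ A.erase a,
        ((if ∀ i : Fin n, (i : ℕ) < k → b i = a i then
            (if tailGraph k a ⊆ K ∧ Disjoint K (tailGraph k b \ tailGraph k a)
              then (1 : ℝ) else 0) else 0)
          + (if tailGraph k a ⊆ K ∧ tailGraph k b \ tailGraph k a ⊆ K then 1 else 0))
      ≤ if K ∈ G then 1 else 0 := by
    intro K hK
    set B := A.filter fun a => tailGraph k a ⊆ K with hB
    have e1 : (∑ a ∈ A, if tailGraph k a ⊆ K then (1 : ℝ) else 0) = B.card := by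
      rw [Finset.sum_boole]
    rw [e1]
    have hnn : ∀ a b, (0 : ℝ) ≤ ((if ∀ i : Fin n, (i : ℕ) < k → b i = a i then
            (if tailGraph k a ⊆ K ∧ Disjoint K (tailGraph k b \ tailGraph k a)
              then (1 : ℝ) else 0) else 0)
          + (if tailGraph k a ⊆ K ∧ tailGraph k b \ tailGraph k a ⊆ K then 1 else 0)) := by
      intro a b
      positivity
    by_cases hiso : IsIsolating A k K
    · rw [if_pos (hG K hK hiso)]
      have h1 : (∑ a ∈ B, ∑ b ∈ B.erase a, (1 : ℝ)) ≤ ∑ a ∈ A, ∑ b ∈ A.erase a,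
        ((if ∀ i : Fin n, (i : ℕ) < k → b i = a i then
            (if tailGraph k a ⊆ K ∧ Disjoint K (tailGraph k b \ tailGraph k a)
              then (1 : ℝ) else 0) else 0)
          + (if tailGraph k a ⊆ K ∧ tailGraph k b \ tailGraph k a ⊆ K then 1 else 0)) := by
        refine (Finset.sum_le_sum fun a ha => ?_).trans
          (Finset.sum_le_sum_of_subset_of_nonneg (Finset.filter_subset _ _) fun a _ _ =>
            Finset.sum_nonneg fun b _ => hnn a b)
        refine (Finset.sum_le_sum fun b hb => ?_).trans
          (Finset.sum_le_sum_of_subset_of_nonneg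
            (Finset.erase_subset_erase _ (Finset.filter_subset _ _)) fun b _ _ => hnn a b)
        have ha' := (Finset.mem_filter.mp ha).2
        have hb' := (Finset.mem_filter.mp (Finset.mem_of_mem_erase hb)).2
        rw [if_pos (c := tailGraph k a ⊆ K ∧ tailGraph k b \ tailGraph k a ⊆ K)
          ⟨ha', Finset.sdiff_subset.trans hb'⟩]
        have : (0 : ℝ) ≤ (if ∀ i : Fin n, (i : ℕ) < k → b i = a i then
            (if tailGraph k a ⊆ K ∧ Disjoint K (tailGraph k b \ tailGraph k a)
              then (1 : ℝ) else 0) else 0) := by positivity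
        linarith
      have h2 : (∑ a ∈ B, ∑ b ∈ B.erase a, (1 : ℝ)) = B.card * ((B.card : ℝ) - 1) := by
        rw [Finset.sum_congr rfl (g := fun _ => (B.card : ℝ) - 1)]
        · rw [Finset.sum_const, nsmul_eq_mul]
        · intro a ha
          simp only [Finset.sum_const, nsmul_eq_mul, mul_one]
          rw [Finset.card_erase_of_mem ha, Nat.cast_sub (Finset.card_pos.mpr ⟨a, ha⟩)]
          simp
      rw [h2] at h1
      nlinarith [sq_nonneg ((B.card : ℝ) - 1)]
    · have h0 : (0 : ℝ) ≤ if K ∈ G then 1 else 0 := by positivity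
      refine le_trans ?_ h0
      rw [sub_nonpos]
      calc (B.card : ℝ) = ∑ a ∈ B, (1 : ℝ) := by simp
        _ ≤ _ := (Finset.sum_le_sum fun a ha => ?_).trans
          (Finset.sum_le_sum_of_subset_of_nonneg (Finset.filter_subset _ _) fun a _ _ =>
            Finset.sum_nonneg fun b _ => hnn a b)
      unfold IsIsolating at hiso
      push Not at hiso
      have ha' := Finset.mem_filter.mp ha
      obtain ⟨b, hb, hba, hsame, hdis⟩ := hiso a ha'.1 ha'.2
      refine le_trans ?_ (Finset.single_le_sum (fun b _ => hnn a b)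
        (Finset.mem_erase.mpr ⟨hba, hb⟩))
      have hd : Disjoint K (tailGraph k b \ tailGraph k a) := by
        rw [Finset.disjoint_left] at hdis ⊢
        intro z hz hz'
        exact hdis (Finset.mem_sdiff.mpr ⟨hz, (Finset.mem_sdiff.mp hz').2⟩)
          (Finset.mem_sdiff.mp hz').1
      rw [if_pos hsame, if_pos ⟨ha'.2, hd⟩]
      have : (0 : ℝ) ≤ if tailGraph k a ⊆ K ∧ tailGraph k b \ tailGraph k a ⊆ K
        then 1 else 0 := by positivity
      linarith
  have hsum := Finset.sum_le_sum key
  have hfin : (∑ K ∈ P, if K ∈ G then (1 : ℝ) else 0) ≤ G.card := by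
    rw [Finset.sum_boole]
    exact_mod_cast Finset.card_le_card fun K hK => (Finset.mem_filter.mp hK).2
  refine le_trans (le_of_eq ?_) (hsum.trans hfin)
  rw [Finset.sum_sub_distrib]
  congr 1
  · rw [Finset.sum_comm]
    exact Finset.sum_congr rfl fun a _ => by rw [Finset.sum_boole]
  · rw [Finset.sum_comm]
    refine Finset.sum_congr rfl fun a _ => ?_
    rw [Finset.sum_comm]
    refine Finset.sum_congr rfl fun b _ => ?_
    rw [Finset.sum_add_distrib, Finset.sum_boole]
    congr 1
    split_ifs
    · rw [Finset.sum_boole]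
    · simp

lemma sum_prod_ite_eq {n m : ℕ} (a : Fin n → Fin m) (u v : Fin n → ℝ) :
    ∑ b : Fin n → Fin m, ∏ i, (if b i = a i then u i else v i)
      = ∏ i, (u i + ((m : ℝ) - 1) * v i) := by
  have h := Finset.prod_univ_sum (fun _ : Fin n => (Finset.univ : Finset (Fin m)))
    (fun i x => if x = a i then u i else v i)
  rw [Fintype.piFinset_univ] at h
  rw [← h]
  refine Finset.prod_congr rfl fun i _ => ?_
  rw [← Finset.add_sum_erase _ _ (Finset.mem_univ (a i)), if_pos rfl]
  congr 1
  rw [Finset.sum_congr rfl (g := fun _ => v i)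
    (fun x hx => if_neg (Finset.ne_of_mem_erase hx))]
  rw [Finset.sum_const, Finset.card_erase_of_mem (Finset.mem_univ _), Finset.card_univ,
    Fintype.card_fin, nsmul_eq_mul, Nat.cast_sub (by have := (a i).2; omega)]
  simp

lemma prod_ite_lt {n k : ℕ} (hk : k ≤ n) (x y : ℝ) :
    ∏ i : Fin n, (if (i : ℕ) < k then x else y) = x ^ k * y ^ (n - k) := by
  rw [Fin.prod_univ_eq_prod_range (fun i => if i < k then x else y) n,
    ← Finset.prod_range_mul_prod_Ico _ hk]
  congr 1
  · rw [Finset.prod_congr rfl (g := fun _ => x) (fun i hi => if_pos (Finset.mem_range.mp hi))]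
    simp
  · rw [Finset.prod_congr rfl (g := fun _ => y)
      (fun i hi => if_neg (by have := (Finset.mem_Ico.mp hi).1; omega))]
    simp

lemma card_tailGraph {n m k : ℕ} (hk : k ≤ n) (a : Fin n → Fin m) :
    (tailGraph k a).card = n - k := card_funGraph_inter_tailVars hk a

/-- The expected number of isolating sets of a random code that is almost pairwise
independent. -/
theorem le_expect_card_isolating {n m k l : ℕ} {Ω : Type*} [Fintype Ω] (hk : k ≤ n)
    (hl : l < (tailVars n m k).card - (n - k)) (A : Ω → Finset (Fin n → Fin m))
    (G : Ω → Finset (Finset (Fin n × Fin m)))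
    (hG : ∀ s, ∀ K ∈ (tailVars n m k).powersetCard (l + (n - k)), IsIsolating (A s) k K → K ∈ G s)
    (τ θ q : ℝ) (hθ : 0 ≤ θ)
    (hq : q = (l : ℝ) / ((tailVars n m k).card - (n - k) : ℕ))
    (h1 : ∀ a, 𝔼 s, (if a ∈ A s then (1 : ℝ) else 0) = τ)
    (h2 : ∀ a b, 𝔼 s, (if a ∈ A s ∧ b ∈ A s then (1 : ℝ) else 0)
      ≤ τ ^ 2 + τ * ∏ i, if b i = a i then 1 else θ) :
    (m : ℝ) ^ n * τ * ((tailVars n m k).card - (n - k)).choose l *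
      (1 - τ * (m : ℝ) ^ k * (1 + ((m : ℝ) - 1) * q) ^ (n - k)
        - τ * (1 + ((m : ℝ) - 1) * (1 - q)) ^ (n - k)
        - 2 * ((1 + ((m : ℝ) - 1) * θ) ^ n - 1)) ≤ 𝔼 s, ((G s).card : ℝ) := by
  set P := (tailVars n m k).powersetCard (l + (n - k)) with hP
  set R := (tailVars n m k).card - (n - k) with hR
  have hRpos : (0 : ℝ) < R := by exact_mod_cast (by omega : 0 < R)
  have hq0 : 0 ≤ q := by rw [hq]; positivity
  have hq1 : q ≤ 1 := by
    rw [hq, div_le_one hRpos]; exact_mod_cast hl.le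
  have hτ : ∀ a : Fin n → Fin m, 0 ≤ τ := fun a => by
    rw [← h1 a]; exact Finset.expect_nonneg fun s _ => by positivity
  -- the two counts of sets
  have hN1 : ∀ a : Fin n → Fin m,
      ((P.filter fun K => tailGraph k a ⊆ K).card : ℝ) = R.choose l := by
    intro a
    rw [hP, card_filter_subset _ (tailGraph k a) _ Finset.inter_subset_right
      (by rw [card_tailGraph hk]; omega), card_tailGraph hk, Nat.add_sub_cancel]
  have hd : ∀ a b : Fin n → Fin m,
      Disjoint (tailGraph k a) (tailGraph k b \ tailGraph k a) := fun a b =>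
    Finset.disjoint_sdiff
  have hsub : ∀ a b : Fin n → Fin m,
      tailGraph k b \ tailGraph k a ⊆ tailVars n m k := fun a b =>
    Finset.sdiff_subset.trans Finset.inter_subset_right
  have hc1 : ∀ a b : Fin n → Fin m, ((P.filter fun K => tailGraph k a ⊆ K ∧
      Disjoint K (tailGraph k b \ tailGraph k a)).card : ℝ)
      ≤ R.choose l * ∏ i : Fin n, if k ≤ (i : ℕ) ∧ b i ≠ a i then 1 - q else 1 := by
    intro a b
    have := card_filter_subset_disjoint_le (tailVars n m k) (tailGraph k a) _ l
      Finset.inter_subset_right (hsub a b) (hd a b) (by rw [card_tailGraph hk]; exact hl)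
    rw [card_tailGraph hk, ← hR, ← hq, pow_card_tailGraph_sdiff] at this
    exact this
  have hc2 : ∀ a b : Fin n → Fin m, ((P.filter fun K => tailGraph k a ⊆ K ∧
      tailGraph k b \ tailGraph k a ⊆ K).card : ℝ)
      ≤ R.choose l * ∏ i : Fin n, if k ≤ (i : ℕ) ∧ b i ≠ a i then q else 1 := by
    intro a b
    have := card_filter_union_subset_le (tailVars n m k) (tailGraph k a) _ l
      Finset.inter_subset_right (hsub a b) (hd a b) (by rw [card_tailGraph hk]; exact hl)
    rw [card_tailGraph hk, ← hR, ← hq, pow_card_tailGraph_sdiff] at this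
    exact this
  set c : (Fin n → Fin m) → (Fin n → Fin m) → ℝ := fun a b =>
    (if ∀ i : Fin n, (i : ℕ) < k → b i = a i then
        ((P.filter fun K => tailGraph k a ⊆ K ∧
          Disjoint K (tailGraph k b \ tailGraph k a)).card : ℝ) else 0)
      + (P.filter fun K => tailGraph k a ⊆ K ∧ tailGraph k b \ tailGraph k a ⊆ K).card with hc
  have hc0 : ∀ a b, 0 ≤ c a b := fun a b => by simp only [hc]; positivity
  set u : (Fin n → Fin m) → (Fin n → Fin m) → ℝ := fun a b =>
    ∏ i : Fin n, if b i = a i then (1 : ℝ) else if (i : ℕ) < k then 0 else 1 - q with hu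
  set v : (Fin n → Fin m) → (Fin n → Fin m) → ℝ := fun a b =>
    ∏ i : Fin n, if b i = a i then (1 : ℝ) else if (i : ℕ) < k then 1 else q with hv
  have hu0 : ∀ a b, 0 ≤ u a b := fun a b => Finset.prod_nonneg fun i _ => by
    split_ifs <;> linarith
  have hu1 : ∀ a b, u a b ≤ 1 := fun a b => Finset.prod_le_one
    (fun i _ => by split_ifs <;> linarith) (fun i _ => by split_ifs <;> linarith)
  have hv1 : ∀ a b, v a b ≤ 1 := fun a b => Finset.prod_le_one
    (fun i _ => by split_ifs <;> linarith) (fun i _ => by split_ifs <;> linarith)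
  have hcuv : ∀ a b, c a b ≤ R.choose l * (u a b + v a b) := by
    intro a b
    rw [mul_add]
    refine add_le_add ?_ ?_
    · split_ifs with hsame
      · refine (hc1 a b).trans (le_of_eq ?_)
        congr 1
        refine Finset.prod_congr rfl fun i _ => ?_
        by_cases hi : (i : ℕ) < k
        · simp [hsame i hi]
        · by_cases hb : b i = a i
          · simp [hb]
          · simp [hb, hi, not_lt.mp hi]
      · exact mul_nonneg (by positivity) (hu0 a b)
    · refine (hc2 a b).trans (le_of_eq ?_)
      congr 1
      refine Finset.prod_congr rfl fun i _ => ?_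
      by_cases hi : (i : ℕ) < k
      · have : ¬ k ≤ (i : ℕ) := by omega
        simp [hi, this]
      · by_cases hb : b i = a i
        · simp [hb]
        · simp [hb, hi, not_lt.mp hi]
  -- pointwise bound
  have hpt : ∀ s, (∑ a, (if a ∈ A s then (1 : ℝ) else 0) * R.choose l)
      - ∑ a, ∑ b ∈ Finset.univ.erase a, (if a ∈ A s ∧ b ∈ A s then (1 : ℝ) else 0) * c a b
      ≤ (G s).card := by
    intro s
    refine le_trans (le_of_eq ?_) (card_mul_le_card_isolating k (l + (n - k)) (A s) (G s) (hG s))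
    congr 1
    · rw [← hP, Finset.sum_congr rfl fun a _ => hN1 a]
      rw [← Finset.sum_mul, Finset.sum_boole]
      simp
    · have e1 : ∀ a, (∑ b ∈ Finset.univ.erase a,
          (if a ∈ A s ∧ b ∈ A s then (1 : ℝ) else 0) * c a b)
          = if a ∈ A s then ∑ b ∈ (A s).erase a, c a b else 0 := by
        intro a
        split_ifs with ha
        · have : (A s).erase a = (Finset.univ.erase a).filter fun b => b ∈ A s := by
            ext b; simp [and_comm]
          rw [this, Finset.sum_filter]
          exact Finset.sum_congr rfl fun b _ => by simp [ha]
        · exact Finset.sum_eq_zero fun b _ => by simp [ha]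
      rw [Finset.sum_congr rfl fun a _ => e1 a, ← Finset.sum_filter]
      refine Finset.sum_congr ?_ fun a _ => rfl
      simp
  have hE := Finset.expect_le_expect (s := Finset.univ) fun s _ => hpt s
  refine le_trans ?_ hE
  rw [Finset.expect_sub_distrib, Finset.expect_sum_comm, Finset.expect_sum_comm]
  have eA : (∑ a : Fin n → Fin m, 𝔼 s, (if a ∈ A s then (1 : ℝ) else 0) * R.choose l)
      = (m : ℝ) ^ n * τ * R.choose l := by
    rw [Finset.sum_congr rfl (g := fun _ => τ * R.choose l)]
    · simp [mul_assoc]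
    · intro a _
      rw [← Finset.expect_mul, h1]
  rw [eA]
  have hB : ∀ a : Fin n → Fin m, (𝔼 s, ∑ b ∈ Finset.univ.erase a,
      (if a ∈ A s ∧ b ∈ A s then (1 : ℝ) else 0) * c a b)
      ≤ τ * R.choose l * (τ * (m : ℝ) ^ k * (1 + ((m : ℝ) - 1) * q) ^ (n - k)
        + τ * (1 + ((m : ℝ) - 1) * (1 - q)) ^ (n - k)
        + 2 * ((1 + ((m : ℝ) - 1) * θ) ^ n - 1)) := by
    intro a
    have hτ0 := hτ a
    rw [Finset.expect_sum_comm]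
    have hterm : ∀ b, (𝔼 s, (if a ∈ A s ∧ b ∈ A s then (1 : ℝ) else 0) * c a b)
        ≤ τ * R.choose l * (τ * u a b + τ * v a b
          + 2 * ∏ i, if b i = a i then 1 else θ) := by
      intro b
      rw [← Finset.expect_mul]
      have hp0 : 0 ≤ ∏ i : Fin n, if b i = a i then 1 else θ :=
        Finset.prod_nonneg fun i _ => by split_ifs <;> linarith
      calc _ ≤ (τ ^ 2 + τ * ∏ i, if b i = a i then 1 else θ)
            * (R.choose l * (u a b + v a b)) :=
            mul_le_mul (h2 a b) (hcuv a b) (hc0 a b) (by positivity)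
        _ = τ * R.choose l * (τ * u a b + τ * v a b
            + (u a b + v a b) * ∏ i, if b i = a i then 1 else θ) := by ring
        _ ≤ _ := by
            gcongr
            linarith [hu1 a b, hv1 a b]
    refine (Finset.sum_le_sum fun b _ => hterm b).trans ?_
    rw [← Finset.mul_sum]
    refine mul_le_mul_of_nonneg_left ?_ (by positivity)
    have su : ∑ b, u a b = (1 + ((m : ℝ) - 1) * (1 - q)) ^ (n - k) := by
      simp only [hu]
      rw [sum_prod_ite_eq a (fun _ => 1) (fun i => if (i : ℕ) < k then 0 else 1 - q)]
      rw [Finset.prod_congr rfl (g := fun i : Fin n => if (i : ℕ) < k then (1 : ℝ)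
        else 1 + ((m : ℝ) - 1) * (1 - q)) (fun i _ => by split_ifs <;> ring), prod_ite_lt hk]
      simp
    have sv : ∑ b, v a b = (m : ℝ) ^ k * (1 + ((m : ℝ) - 1) * q) ^ (n - k) := by
      simp only [hv]
      rw [sum_prod_ite_eq a (fun _ => 1) (fun i => if (i : ℕ) < k then 1 else q)]
      rw [Finset.prod_congr rfl (g := fun i : Fin n => if (i : ℕ) < k then (m : ℝ)
        else 1 + ((m : ℝ) - 1) * q) (fun i _ => by split_ifs <;> ring), prod_ite_lt hk]
    have sθ : ∑ b : Fin n → Fin m, (∏ i, if b i = a i then 1 else θ)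
        = (1 + ((m : ℝ) - 1) * θ) ^ n := by
      rw [sum_prod_ite_eq a (fun _ => 1) (fun _ => θ)]
      simp
    have sθ' : ∑ b ∈ Finset.univ.erase a, (∏ i, if b i = a i then 1 else θ)
        = (1 + ((m : ℝ) - 1) * θ) ^ n - 1 := by
      rw [← sθ, ← Finset.add_sum_erase _ _ (Finset.mem_univ a)]
      simp
    have hv0 : ∀ a b, 0 ≤ v a b := fun a b => Finset.prod_nonneg fun i _ => by
      split_ifs <;> linarith
    rw [Finset.sum_add_distrib, Finset.sum_add_distrib, ← Finset.mul_sum, ← Finset.mul_sum,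
      ← Finset.mul_sum, sθ']
    have hu' : ∑ b ∈ Finset.univ.erase a, u a b ≤ ∑ b, u a b :=
      Finset.sum_le_sum_of_subset_of_nonneg (Finset.erase_subset _ _) fun b _ _ => hu0 a b
    have hv' : ∑ b ∈ Finset.univ.erase a, v a b ≤ ∑ b, v a b :=
      Finset.sum_le_sum_of_subset_of_nonneg (Finset.erase_subset _ _) fun b _ _ => hv0 a b
    rw [su] at hu'
    rw [sv] at hv'
    have := mul_le_mul_of_nonneg_left hu' hτ0
    have := mul_le_mul_of_nonneg_left hv' hτ0
    linarith
  have hBs := Finset.sum_le_sum (s := Finset.univ) fun a _ => hB a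
  rw [Finset.sum_const, Finset.card_univ, Fintype.card_fun, Fintype.card_fin, Fintype.card_fin,
    nsmul_eq_mul, Nat.cast_pow] at hBs
  linarith

lemma expect_forall_mem {α J : Type*} [Fintype α] [DecidableEq α] [Fintype J] [DecidableEq J]
    [Nonempty J] (V : Finset α) (B : α → Finset J) :
    𝔼 s : α → J, (if ∀ z ∈ V, s z ∈ B z then (1 : ℝ) else 0)
      = ∏ z ∈ V, ((B z).card : ℝ) / Fintype.card J := by
  rw [Fintype.expect_eq_sum_div_card, Finset.sum_boole]
  have e : (Finset.univ.filter fun s : α → J => ∀ z ∈ V, s z ∈ B z)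
      = Fintype.piFinset fun z => if z ∈ V then B z else Finset.univ := by
    ext s
    simp only [Finset.mem_filter, Finset.mem_univ, true_and, Fintype.mem_piFinset]
    refine forall_congr' fun z => ?_
    split_ifs with h <;> simp [h]
  have hJ : (Fintype.card J : ℝ) ≠ 0 := by exact_mod_cast Fintype.card_ne_zero
  rw [e, Fintype.card_piFinset, Fintype.card_fun, Nat.cast_prod, Nat.cast_pow,
    ← Finset.card_univ (α := α), ← Finset.prod_const, ← Finset.prod_div_distrib,
    ← Finset.prod_subset (Finset.subset_univ V)]
  · exact Finset.prod_congr rfl fun z hz => by rw [if_pos hz]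
  · intro z _ hz
    rw [if_neg hz, Finset.card_univ, div_self hJ]

section Code

variable {J ι : Type*} [Fintype J] [DecidableEq J] [Nonempty J] [Fintype ι] {n m : ℕ}

lemma expect_mem_wordCode (f : ι → Fin n → J) (hf : Function.Injective f) (a : Fin n → Fin m) :
    𝔼 s : Fin n × Fin m → J, (if a ∈ wordCode f s then (1 : ℝ) else 0)
      = Fintype.card ι / (Fintype.card J : ℝ) ^ n := by
  have h : ∀ s : Fin n × Fin m → J, (if a ∈ wordCode f s then (1 : ℝ) else 0)
      = ∑ x, if ∀ z ∈ funGraph a, s z ∈ ({f x z.1} : Finset J) then (1 : ℝ) else 0 := by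
    intro s
    have e : ∀ x, (∀ z ∈ funGraph a, s z ∈ ({f x z.1} : Finset J)) ↔ ∀ i, s (i, a i) = f x i := by
      intro x
      constructor
      · intro h i
        simpa using h (i, a i) ((mem_funGraph _ _).mpr rfl)
      · rintro h ⟨i, y⟩ hz
        rw [mem_funGraph] at hz
        simp only at hz
        subst hz
        simpa using h i
    simp only [e]
    split_ifs with ha
    · obtain ⟨x, hx⟩ := (mem_wordCode _ _ _).mp ha
      rw [Finset.sum_eq_single x, if_pos hx]
      · intro y _ hy
        refine if_neg fun h => hy (hf (funext fun i => ?_))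
        rw [← h i, hx i]
      · simp
    · symm
      refine Finset.sum_eq_zero fun x _ => if_neg fun h => ha ?_
      exact (mem_wordCode _ _ _).mpr ⟨x, h⟩
  rw [Finset.expect_congr rfl fun s _ => h s, Finset.expect_sum_comm]
  simp only [expect_forall_mem, Finset.card_singleton, Nat.cast_one, Finset.prod_const,
    card_funGraph]
  rw [Finset.sum_const, Finset.card_univ, nsmul_eq_mul, one_div, inv_pow, div_eq_mul_inv]

lemma expect_mem_mem_wordCode_le (f : ι → Fin n → J)
    (hmds : ∀ x (E : Finset (Fin n)), ((Finset.univ.filter fun y => ∀ i ∈ E, f x i = f y i).card : ℝ)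
      ≤ Fintype.card ι / (Fintype.card J : ℝ) ^ E.card + 1) (a b : Fin n → Fin m) :
    𝔼 s : Fin n × Fin m → J, (if a ∈ wordCode f s ∧ b ∈ wordCode f s then (1 : ℝ) else 0)
      ≤ (Fintype.card ι / (Fintype.card J : ℝ) ^ n) ^ 2
        + (Fintype.card ι / (Fintype.card J : ℝ) ^ n) *
          ∏ i, if b i = a i then 1 else (Fintype.card J : ℝ)⁻¹ := by
  set p := (Fintype.card J : ℝ) with hp
  have hp0 : 0 < p := by rw [hp]; exact_mod_cast Fintype.card_pos
  set E := Finset.univ.filter fun i => b i = a i with hE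
  have h : ∀ s : Fin n × Fin m → J,
      (if a ∈ wordCode f s ∧ b ∈ wordCode f s then (1 : ℝ) else 0)
      ≤ ∑ x, ∑ y, (if ∀ i ∈ E, f x i = f y i then (1 : ℝ) else 0) *
        if ∀ z ∈ funGraph a ∪ funGraph b,
          s z ∈ ({if z ∈ funGraph a then f x z.1 else f y z.1} : Finset J) then (1 : ℝ) else 0 := by
    intro s
    split_ifs with hab
    · obtain ⟨x, hx⟩ := (mem_wordCode _ _ _).mp hab.1
      obtain ⟨y, hy⟩ := (mem_wordCode _ _ _).mp hab.2
      have c1 : ∀ i ∈ E, f x i = f y i := by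
        intro i hi
        rw [← hx, ← hy, (Finset.mem_filter.mp hi).2]
      have c2 : ∀ z ∈ funGraph a ∪ funGraph b,
          s z ∈ ({if z ∈ funGraph a then f x z.1 else f y z.1} : Finset J) := by
        rintro ⟨i, c⟩ hz
        rw [Finset.mem_singleton]
        split_ifs with hza
        · rw [mem_funGraph] at hza
          simp only at hza
          rw [← hza, hx]
        · rcases Finset.mem_union.mp hz with h' | h'
          · exact absurd h' hza
          · rw [mem_funGraph] at h'
            simp only at h'
            rw [← h', hy]
      refine le_trans ?_ (Finset.single_le_sum (fun x _ => Finset.sum_nonneg fun y _ => ?_)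
        (Finset.mem_univ x))
      · refine le_trans ?_ (Finset.single_le_sum (fun y _ => ?_) (Finset.mem_univ y))
        · rw [if_pos c1, if_pos c2, one_mul]
        · positivity
      · positivity
    · exact Finset.sum_nonneg fun x _ => Finset.sum_nonneg fun y _ => by positivity
  refine (Finset.expect_le_expect fun s _ => h s).trans ?_
  rw [Finset.expect_sum_comm]
  have hsd := pow_card_tailGraph_sdiff (n := n) (m := m) 0 a b p⁻¹
  have ht : ∀ c : Fin n → Fin m, tailGraph 0 c = funGraph c := by
    intro c
    refine Finset.inter_eq_left.mpr fun z _ => ?_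
    rw [mem_tailVars]; exact Nat.zero_le _
  rw [ht, ht] at hsd
  set D := (funGraph b \ funGraph a).card with hD
  have hprod : (∏ i, if b i = a i then 1 else p⁻¹) = p⁻¹ ^ D := by
    rw [hsd]
    refine Finset.prod_congr rfl fun i _ => ?_
    by_cases hi : b i = a i <;> simp [hi]
  have hED : E.card + D = n := by
    have e1 : (funGraph a ∩ funGraph b) = E.image fun i => (i, a i) := by
      ext ⟨i, c⟩
      simp only [Finset.mem_inter, mem_funGraph, hE, Finset.mem_image, Finset.mem_filter,
        Finset.mem_univ, true_and, Prod.mk.injEq]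
      constructor
      · rintro ⟨h1, h2⟩
        exact ⟨i, h2.trans h1.symm, rfl, h1⟩
      · rintro ⟨j, h1, rfl, h2⟩
        exact ⟨h2, h1.trans h2⟩
    have e2 : E.card = (funGraph b ∩ funGraph a).card := by
      rw [Finset.inter_comm, e1,
        Finset.card_image_of_injective _ (fun i j h => (Prod.ext_iff.mp h).1)]
    have := Finset.card_sdiff_add_card_inter (funGraph b) (funGraph a)
    rw [card_funGraph] at this
    omega
  have hU : (funGraph a ∪ funGraph b).card = n + D := by
    rw [← Finset.union_sdiff_self_eq_union, Finset.card_union_of_disjoint Finset.disjoint_sdiff,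
      card_funGraph]
  have hterm : ∀ x, (𝔼 s : Fin n × Fin m → J,
      ∑ y, (if ∀ i ∈ E, f x i = f y i then (1 : ℝ) else 0) *
        if ∀ z ∈ funGraph a ∪ funGraph b,
          s z ∈ ({if z ∈ funGraph a then f x z.1 else f y z.1} : Finset J) then (1 : ℝ) else 0)
      ≤ (Fintype.card ι / p ^ E.card + 1) * p⁻¹ ^ (n + D) := by
    intro x
    rw [Finset.expect_sum_comm]
    simp only [← Finset.mul_expect, expect_forall_mem, Finset.card_singleton, Nat.cast_one,
      Finset.prod_const, hU]
    rw [← Finset.sum_mul, Finset.sum_boole, ← hp, one_div]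
    exact mul_le_mul_of_nonneg_right (hmds x E) (by positivity)
  refine (Finset.sum_le_sum fun x _ => hterm x).trans (le_of_eq ?_)
  rw [Finset.sum_const, Finset.card_univ, nsmul_eq_mul, hprod]
  have hpn : p ^ n = p ^ E.card * p ^ D := by rw [← pow_add, hED]
  rw [pow_add, inv_pow, inv_pow, hpn]
  field_simp

lemma expect_le_card_filter_mem_le {n m : ℕ} (V : Finset (Fin n × J)) (r : ℕ) :
    𝔼 s : Fin n × Fin m → J,
      (if r ≤ (Finset.univ.filter fun z : Fin n × Fin m => (z.1, s z) ∈ V).card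
        then (1 : ℝ) else 0) ≤ (m * V.card / Fintype.card J : ℝ) ^ r := by
  set B : Fin n × Fin m → Finset J := fun z => Finset.univ.filter fun x => (z.1, x) ∈ V with hB
  have h : ∀ s : Fin n × Fin m → J,
      (if r ≤ (Finset.univ.filter fun z : Fin n × Fin m => (z.1, s z) ∈ V).card
        then (1 : ℝ) else 0)
      ≤ ∑ g : Fin r ↪ Fin n × Fin m,
        if ∀ z ∈ Finset.univ.map g, s z ∈ B z then (1 : ℝ) else 0 := by
    intro s
    split_ifs with hr
    · obtain ⟨g⟩ := Function.Embedding.nonempty_of_card_le (α := Fin r)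
        (β := (Finset.univ.filter fun z : Fin n × Fin m => (z.1, s z) ∈ V))
        (by rw [Fintype.card_fin, Fintype.card_coe]; exact hr)
      refine le_trans ?_ (Finset.single_le_sum (fun g _ => by positivity)
        (Finset.mem_univ (g.trans (Function.Embedding.subtype _))))
      rw [if_pos]
      intro z hz
      obtain ⟨i, -, rfl⟩ := Finset.mem_map.mp hz
      have := (Finset.mem_filter.mp (g i).2).2
      simpa [hB] using this
    · positivity
  refine (Finset.expect_le_expect fun s _ => h s).trans ?_
  rw [Finset.expect_sum_comm]
  simp only [expect_forall_mem, Finset.prod_map]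
  have hsum : (∑ z, ((B z).card : ℝ) / Fintype.card J) = m * V.card / Fintype.card J := by
    rw [← Finset.sum_div, Fintype.sum_prod_type]
    congr 1
    simp only [hB, Finset.sum_const, Finset.card_univ, Fintype.card_fin, nsmul_eq_mul]
    rw [← Finset.mul_sum]
    congr 1
    rw [Finset.card_eq_sum_card_fiberwise (f := Prod.fst) (t := Finset.univ) (by simp),
      Nat.cast_sum]
    refine Finset.sum_congr rfl fun i _ => ?_
    congr 1
    refine Finset.card_bij (fun x _ => (i, x)) (by simp) (by simp) ?_
    rintro ⟨j, x⟩ hx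
    simp only [Finset.mem_filter] at hx
    obtain ⟨hx, rfl⟩ := hx
    exact ⟨x, by simpa using hx, rfl⟩
  rw [← hsum]
  have hp := Finset.prod_univ_sum (fun _ : Fin r => (Finset.univ : Finset (Fin n × Fin m)))
    (fun _ z => ((B z).card : ℝ) / Fintype.card J)
  rw [Fintype.piFinset_univ, Finset.prod_const, Finset.card_univ, Fintype.card_fin] at hp
  rw [hp]
  rw [← Finset.sum_image (f := fun g : Fin r → Fin n × Fin m =>
      ∏ i, ((B (g i)).card : ℝ) / Fintype.card J)
    (s := (Finset.univ : Finset (Fin r ↪ Fin n × Fin m))) (g := fun g => (g : Fin r → _))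
    (fun g _ g' _ h => DFunLike.coe_injective h)]
  exact Finset.sum_le_sum_of_subset_of_nonneg (Finset.subset_univ _) fun g _ _ =>
    Finset.prod_nonneg fun i _ => by positivity

end Code

/-- The Reed–Solomon code: the values at `0, …, n - 1` of polynomials of degree less than `D`. -/
def powCode (p n D : ℕ) (c : Fin D → ZMod p) (i : Fin n) : ZMod p :=
  ∑ k : Fin D, c k * ((i : ℕ) : ZMod p) ^ (k : ℕ)

lemma powCode_ext {p n D : ℕ} [Fact p.Prime] (hnp : n ≤ p) (E : Finset (Fin n)) (hE : D ≤ E.card)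
    {c c' : Fin D → ZMod p} (h : ∀ i ∈ E, powCode p n D c i = powCode p n D c' i) : c = c' := by
  classical
  set P : (Fin D → ZMod p) → Polynomial (ZMod p) := fun c =>
    ∑ k : Fin D, Polynomial.C (c k) * Polynomial.X ^ (k : ℕ) with hP
  have hdeg : ∀ c, (P c).degree < E.card := by
    intro c
    refine (Polynomial.degree_sum_le _ _).trans_lt ?_
    rw [Finset.sup_lt_iff (WithBot.bot_lt_coe _)]
    intro k _
    refine (Polynomial.degree_C_mul_X_pow_le _ _).trans_lt ?_
    exact_mod_cast k.2.trans_le hE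
  have hev : ∀ c (i : Fin n), (P c).eval ((i : ℕ) : ZMod p) = powCode p n D c i := by
    intro c i
    simp [hP, powCode, Polynomial.eval_finsetSum]
  have hinj : Set.InjOn (fun i : Fin n => ((i : ℕ) : ZMod p)) E := by
    intro i _ j _ hij
    have := congrArg ZMod.val hij
    simp only [ZMod.val_natCast, Nat.mod_eq_of_lt (i.2.trans_le hnp),
      Nat.mod_eq_of_lt (j.2.trans_le hnp)] at this
    exact Fin.ext this
  have heq : P c = P c' := Polynomial.eq_of_degrees_lt_of_eval_index_eq E hinj (hdeg c) (hdeg c')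
    fun i hi => by rw [hev, hev, h i hi]
  have hco : ∀ c (k : Fin D), (P c).coeff k = c k := by
    intro c k
    simp only [hP, Polynomial.finsetSum_coeff, Polynomial.coeff_C_mul_X_pow]
    rw [Finset.sum_eq_single k]
    · simp
    · intro j _ hj
      exact if_neg fun h => hj (Fin.ext h.symm)
    · simp
  funext k
  rw [← hco c k, heq, hco]

lemma powCode_injective {p n D : ℕ} [Fact p.Prime] (hnp : n ≤ p) (hD : D ≤ n) :
    Function.Injective (powCode p n D) := fun c c' h =>
  powCode_ext hnp Finset.univ (by simpa using hD) fun i _ => congrFun h i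

lemma card_powCode_agree_le {p n D : ℕ} [Fact p.Prime] (hnp : n ≤ p) (hD : D ≤ n)
    (c : Fin D → ZMod p) (E : Finset (Fin n)) :
    ((Finset.univ.filter fun c' => ∀ i ∈ E, powCode p n D c i = powCode p n D c' i).card : ℝ)
      ≤ Fintype.card (Fin D → ZMod p) / (Fintype.card (ZMod p) : ℝ) ^ E.card + 1 := by
  have hp : (0 : ℝ) < p := by exact_mod_cast (Fact.out : p.Prime).pos
  rw [Fintype.card_fun, ZMod.card, Fintype.card_fin]
  rcases le_total D E.card with h | h
  · have : (Finset.univ.filter fun c' =>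
        ∀ i ∈ E, powCode p n D c i = powCode p n D c' i).card ≤ 1 := by
      refine Finset.card_le_one.mpr fun x hx y hy => ?_
      have hx := (Finset.mem_filter.mp hx).2
      have hy := (Finset.mem_filter.mp hy).2
      exact powCode_ext hnp E h fun i hi => by rw [← hx i hi, hy i hi]
    have h2 : (0 : ℝ) ≤ (p ^ D : ℕ) / (p : ℝ) ^ E.card := by positivity
    have h3 : ((Finset.univ.filter fun c' =>
        ∀ i ∈ E, powCode p n D c i = powCode p n D c' i).card : ℝ) ≤ 1 := by exact_mod_cast this
    linarith
  · obtain ⟨E', hEE', -, hE'⟩ := Finset.exists_subsuperset_card_eq (Finset.subset_univ E) h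
      (by simpa using hD)
    have hc : (Finset.univ.filter fun c' =>
        ∀ i ∈ E, powCode p n D c i = powCode p n D c' i).card ≤ p ^ (D - E.card) := by
      have e : p ^ (D - E.card) = (Finset.univ : Finset (↥(E' \ E) → ZMod p)).card := by
        rw [Finset.card_univ, Fintype.card_fun, ZMod.card, Fintype.card_coe,
          Finset.card_sdiff_of_subset hEE', hE']
      rw [e]
      refine Finset.card_le_card_of_injOn (fun c' i => powCode p n D c' i) (by simp) ?_
      intro x hx y hy hxy
      have hx := (Finset.mem_filter.mp hx).2
      have hy := (Finset.mem_filter.mp hy).2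
      refine powCode_ext hnp E' hE'.ge fun i hi => ?_
      by_cases hiE : i ∈ E
      · rw [← hx i hiE, hy i hiE]
      · exact congrFun hxy ⟨i, Finset.mem_sdiff.mpr ⟨hi, hiE⟩⟩
    have hc' : ((Finset.univ.filter fun c' =>
        ∀ i ∈ E, powCode p n D c i = powCode p n D c' i).card : ℝ) ≤ (p : ℝ) ^ (D - E.card) := by
      exact_mod_cast hc
    rw [pow_sub₀ _ hp.ne' h, ← div_eq_mul_inv] at hc'
    push_cast
    linarith

lemma card_tailVars {n m k : ℕ} (hk : k ≤ n) : (tailVars n m k).card = (n - k) * m := by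
  have h : tailVars n m k
      = (Finset.univ.filter fun i : Fin n => k ≤ (i : ℕ)) ×ˢ (Finset.univ : Finset (Fin m)) := by
    ext z
    simp [mem_tailVars]
  rw [h, Finset.card_product, Finset.card_univ, Fintype.card_fin]
  congr 1
  have h2 := Finset.card_filter_add_card_filter_not (s := (Finset.univ : Finset (Fin n)))
    (fun i : Fin n => (i : ℕ) < k)
  have h3 : (Finset.univ.filter fun i : Fin n => (i : ℕ) < k).card = k := by
    rw [Fin.card_filter_val_lt]
    exact min_eq_right hk
  simp only [not_lt, Finset.card_univ, Fintype.card_fin] at h2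
  omega

lemma card_powerset_filter_card_le {α : Type*} [DecidableEq α] (Y : Finset α) (κ L : ℕ)
    (hL : L ≤ κ) (hκ : κ < Y.card) (x : ℝ) (hx : x ≤ 1)
    (hκx : (κ : ℝ) = x * (Y.card - κ : ℕ)) :
    ((Y.powerset.filter fun H => H.card ≤ L).card : ℝ)
      ≤ (L + 1) * (Y.card.choose κ * x ^ (κ - L)) := by
  have hpos : (0 : ℝ) < (Y.card - κ : ℕ) := by exact_mod_cast (by omega : 0 < Y.card - κ)
  have hx0 : 0 ≤ x := by
    by_contra h
    have : x * (Y.card - κ : ℕ) < 0 := mul_neg_of_neg_of_pos (not_le.mp h) hpos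
    have : (0 : ℝ) ≤ κ := by positivity
    linarith
  have e : Y.powerset.filter (fun H => H.card ≤ L)
      ⊆ (Finset.range (L + 1)).biUnion fun h => Y.powersetCard h := by
    intro H hH
    simp only [Finset.mem_filter, Finset.mem_powerset] at hH
    simp only [Finset.mem_biUnion, Finset.mem_range, Finset.mem_powersetCard]
    exact ⟨H.card, by omega, hH.1, rfl⟩
  have h1 : (Y.powerset.filter fun H => H.card ≤ L).card
      ≤ ∑ h ∈ Finset.range (L + 1), Y.card.choose h := by
    refine (Finset.card_le_card e).trans (Finset.card_biUnion_le.trans (le_of_eq ?_))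
    exact Finset.sum_congr rfl fun h _ => Finset.card_powersetCard _ _
  calc ((Y.powerset.filter fun H => H.card ≤ L).card : ℝ)
      ≤ ∑ h ∈ Finset.range (L + 1), (Y.card.choose h : ℝ) := by exact_mod_cast h1
    _ ≤ ∑ h ∈ Finset.range (L + 1), (Y.card.choose κ * x ^ (κ - L) : ℝ) := by
        refine Finset.sum_le_sum fun h hh => ?_
        have hh : h ≤ L := Nat.lt_succ_iff.mp (Finset.mem_range.mp hh)
        have h2 := choose_mul_pow_le Y.card κ h hκ.le (κ - h) (by omega)
        have h3 : (Y.card.choose h : ℝ) * (Y.card - κ : ℕ) ^ (κ - h)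
            ≤ Y.card.choose κ * (κ : ℝ) ^ (κ - h) := by exact_mod_cast h2
        rw [hκx, mul_pow, ← mul_assoc] at h3
        have h4 := le_of_mul_le_mul_right h3 (by positivity)
        refine h4.trans ?_
        gcongr ?_ * ?_
        exact pow_le_pow_of_le_one hx0 hx (by omega)
    _ = _ := by simp

/-- The lower bound on the size of a representation, before the choice of parameters. -/
theorem size_lower_bound {F : Type*} [Field F] [CharZero F] {p n D T d : ℕ} [Fact p.Prime]
    (hnp : n ≤ p) (hD : D ≤ n) (Q : Fin T → Fin d → MvPolynomial (Fin n × ZMod p) F)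
    (hQ : ∑ c : Fin D → ZMod p, ∏ i, (X (i, powCode p n D c i) : MvPolynomial (Fin n × ZMod p) F)
      = ∑ i, ∏ j, Q i j) (v : ℝ) (hv : ∀ i j, ((Q i j).vars.card : ℝ) ≤ v)
    {k l m r : ℕ} (hk : k ≤ n) (hm : 1 ≤ m) (hrk : r * k ≤ n - k)
    (hl : l < (n - k) * (m - 1)) (q τ x : ℝ)
    (hq : q = l / ((n - k) * (m - 1) : ℕ)) (hτ : τ = (p : ℝ) ^ D / (p : ℝ) ^ n)
    (hx : ((l + (n - k) : ℕ) : ℝ) = x * ((n - k) * m - (l + (n - k)) : ℕ)) (hx1 : x ≤ 1)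
    (hbr : 0 ≤ 1 - τ * (m : ℝ) ^ k * (1 + ((m : ℝ) - 1) * q) ^ (n - k)
        - τ * (1 + ((m : ℝ) - 1) * (1 - q)) ^ (n - k)
        - 2 * ((1 + ((m : ℝ) - 1) * (p : ℝ)⁻¹) ^ n - 1)) :
    (m : ℝ) ^ n * τ * q ^ (n - k) *
      (1 - τ * (m : ℝ) ^ k * (1 + ((m : ℝ) - 1) * q) ^ (n - k)
        - τ * (1 + ((m : ℝ) - 1) * (1 - q)) ^ (n - k)
        - 2 * ((1 + ((m : ℝ) - 1) * (p : ℝ)⁻¹) ^ n - 1))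
      ≤ T * d * (m * v / p) ^ r + T * ((l + r * k + 1) * x ^ (n - k - r * k)) := by
  classical
  set t := n - k with ht
  set β := 1 - τ * (m : ℝ) ^ k * (1 + ((m : ℝ) - 1) * q) ^ t
        - τ * (1 + ((m : ℝ) - 1) * (1 - q)) ^ t
        - 2 * ((1 + ((m : ℝ) - 1) * (p : ℝ)⁻¹) ^ n - 1) with hβ
  have hY : (tailVars n m k).card = t * m := card_tailVars hk
  have hR : t * m - t = t * (m - 1) := by rw [Nat.mul_sub, mul_one]
  have htm : t ≤ t * m := Nat.le_mul_of_pos_right _ hm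
  have hp0 : (0 : ℝ) < p := by exact_mod_cast (Fact.out : p.Prime).pos
  set A : (Fin n × Fin m → ZMod p) → Finset (Fin n → Fin m) :=
    fun s => wordCode (powCode p n D) s with hA
  set G : (Fin n × Fin m → ZMod p) → Finset (Finset (Fin n × Fin m)) :=
    fun s => ((tailVars n m k).powersetCard (l + t)).filter fun K => IsIsolating (A s) k K with hG
  have hcι : (Fintype.card (Fin D → ZMod p) : ℝ) = (p : ℝ) ^ D := by
    rw [Fintype.card_fun, ZMod.card, Fintype.card_fin, Nat.cast_pow]
  have hlow := le_expect_card_isolating (l := l) (Ω := Fin n × Fin m → ZMod p) hk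
    (by rw [hY, ← ht, hR]; exact hl) A G
    (fun s K hK hiso => Finset.mem_filter.mpr ⟨hK, hiso⟩) τ (p : ℝ)⁻¹ q (by positivity)
    (by rw [hY, ← ht, hR]; exact hq)
    (fun a => by
      rw [hA, expect_mem_wordCode _ (powCode_injective hnp hD), hcι, ZMod.card, hτ])
    (fun a b => by
      have := expect_mem_mem_wordCode_le (m := m) (powCode p n D)
        (card_powCode_agree_le hnp hD) a b
      rw [hcι, ZMod.card, ← hτ] at this
      exact this)
  rw [hY, ← ht, hR] at hlow
  -- the upper bound for a single map
  set H : ℝ := (((tailVars n m k).powerset.filter fun H => H.card ≤ l + r * k).card : ℝ) with hH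
  set C : ℝ := ((t * m).choose (l + t) : ℝ) with hC
  have hpt : ∀ s, ((G s).card : ℝ) ≤ C * (∑ i, ∑ j,
      if r ≤ (Finset.univ.filter fun z : Fin n × Fin m => (z.1, s z) ∈ (Q i j).vars).card
        then (1 : ℝ) else 0) + T * H := by
    intro s
    have hH0 : 0 ≤ H := by positivity
    have hC0 : 0 ≤ C := by positivity
    by_cases hbad : ∃ i j,
        r ≤ (Finset.univ.filter fun z : Fin n × Fin m => (z.1, s z) ∈ (Q i j).vars).card
    · obtain ⟨i, j, hij⟩ := hbad
      have h1 : ((G s).card : ℝ) ≤ C := by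
        rw [hC, ← hY, ← Finset.card_powersetCard]
        exact_mod_cast Finset.card_le_card (Finset.filter_subset _ _)
      have h2 : (1 : ℝ) ≤ ∑ i, ∑ j,
          if r ≤ (Finset.univ.filter fun z : Fin n × Fin m => (z.1, s z) ∈ (Q i j).vars).card
            then (1 : ℝ) else 0 := by
        refine le_trans ?_ (Finset.single_le_sum
          (fun i _ => Finset.sum_nonneg fun j _ => by positivity) (Finset.mem_univ i))
        refine le_trans ?_ (Finset.single_le_sum (fun j _ => by positivity) (Finset.mem_univ j))
        rw [if_pos hij]
      have : (0 : ℝ) ≤ T * H := by positivity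
      nlinarith
    · push Not at hbad
      have h1 := card_isolating_le (powCode p n D) Q hQ s r k l hk
        (fun i j => (hbad i j).le) (G s) (fun K hK => by
          have := Finset.mem_filter.mp hK
          have h' := Finset.mem_powersetCard.mp this.1
          exact ⟨h'.1, h'.2, this.2⟩)
      have h2 : ((G s).card : ℝ) ≤ T * H := by rw [hH]; exact_mod_cast h1
      have : (0 : ℝ) ≤ C * (∑ i, ∑ j,
        if r ≤ (Finset.univ.filter fun z : Fin n × Fin m => (z.1, s z) ∈ (Q i j).vars).card
          then (1 : ℝ) else 0) := by positivity
      linarith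
  have hup : (𝔼 s, ((G s).card : ℝ)) ≤ C * (T * d * (m * v / p) ^ r) + T * H := by
    refine (Finset.expect_le_expect fun s _ => hpt s).trans ?_
    rw [Finset.expect_add_distrib, ← Finset.mul_expect, Finset.expect_sum_comm,
      Fintype.expect_const]
    gcongr
    have : ∀ i j, (𝔼 s : Fin n × Fin m → ZMod p,
        if r ≤ (Finset.univ.filter fun z : Fin n × Fin m => (z.1, s z) ∈ (Q i j).vars).card
          then (1 : ℝ) else 0) ≤ (m * v / p) ^ r := by
      intro i j
      refine (expect_le_card_filter_mem_le _ r).trans ?_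
      rw [ZMod.card]
      have := hv i j
      gcongr
    calc _ ≤ ∑ i : Fin T, ∑ j : Fin d, (m * v / p : ℝ) ^ r := by
          refine Finset.sum_le_sum fun i _ => ?_
          rw [Finset.expect_sum_comm]
          exact Finset.sum_le_sum fun j _ => this i j
      _ = _ := by simp [mul_assoc]
  have hκM : l + t < t * m := by omega
  have hHle : H ≤ (l + r * k + 1) * (C * x ^ (t - r * k)) := by
    have := card_powerset_filter_card_le (tailVars n m k) (l + t) (l + r * k) (by omega)
      (by rw [hY]; exact hκM) x hx1 (by rw [hY]; exact hx)
    rw [hY] at this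
    have e : l + t - (l + r * k) = t - r * k := by omega
    rw [e] at this
    push_cast at this
    exact this
  have hq0 : 0 ≤ q := by rw [hq]; positivity
  have hCpos : 0 < C := by
    rw [hC]; exact_mod_cast Nat.choose_pos hκM.le
  have hN1 : C * q ^ t ≤ ((t * (m - 1)).choose l : ℝ) := by
    have h := choose_add_mul_pow_le (t * (m - 1)) l t hl.le
    have e : t * (m - 1) + t = t * m := by omega
    rw [e] at h
    have hRpos : (0 : ℝ) < (t * (m - 1) : ℕ) := by
      exact_mod_cast (by omega : 0 < t * (m - 1))
    rw [hq, div_pow, ← mul_div_assoc, div_le_iff₀ (by positivity), hC]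
    exact_mod_cast h
  have hτ0 : 0 ≤ τ := by rw [hτ]; positivity
  have hfin : C * ((m : ℝ) ^ n * τ * q ^ t * β)
      ≤ C * (T * d * (m * v / p) ^ r + T * ((l + r * k + 1) * x ^ (t - r * k))) := by
    calc C * ((m : ℝ) ^ n * τ * q ^ t * β) = (m : ℝ) ^ n * τ * (C * q ^ t) * β := by ring
      _ ≤ (m : ℝ) ^ n * τ * ((t * (m - 1)).choose l : ℝ) * β := by gcongr
      _ ≤ 𝔼 s, ((G s).card : ℝ) := hlow
      _ ≤ C * (T * d * (m * v / p) ^ r) + T * H := hup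
      _ ≤ C * (T * d * (m * v / p) ^ r) + T * ((l + r * k + 1) * (C * x ^ (t - r * k))) := by
          gcongr
      _ = _ := by ring
  exact le_of_mul_le_mul_left hfin hCpos

lemma pow_one_add_le_inv_one_sub {x : ℝ} (hx : -1 ≤ x) {N : ℕ} {y : ℝ} (hxy : N * x ≤ y)
    (hy : y < 1) : (1 + x) ^ N ≤ (1 - y)⁻¹ := by
  have h1 : (1 + x) ^ N ≤ Real.exp (N * x) := by
    rw [Real.exp_nat_mul]
    exact pow_le_pow_left₀ (by linarith) (by linarith [Real.add_one_le_exp x]) N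
  have h2 : 1 - y ≤ Real.exp (-y) := by linarith [Real.add_one_le_exp (-y)]
  refine h1.trans ((Real.exp_le_exp.mpr hxy).trans ?_)
  rw [← inv_inv (Real.exp y), ← Real.exp_neg]
  exact inv_anti₀ (by linarith) h2

set_option maxHeartbeats 2000000 in
/-- The choice of the size of the isolating sets. -/
lemma exists_isolating_parameters {n k t m : ℕ} {p τ g : ℝ} (htk : t + k = n) (ht : 1 ≤ t)
    (hn : 10 ≤ n) (hm1 : 12 * n ≤ m) (hm2 : m ≤ n ^ 2) (hp : (n : ℝ) ^ 5 ≤ p) (hg1 : 1 ≤ g)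
    (hg2 : g ≤ 2) (hgt : g ^ t = (m : ℝ) ^ k) (hτ : 0 ≤ τ)
    (hlam1 : τ * (m : ℝ) ^ n / (1 + g) ^ t ≤ 1 / 12)
    (hlam2 : 1 / 36 ≤ τ * (m : ℝ) ^ n / (1 + g) ^ t) :
    ∃ (l : ℕ) (q x : ℝ), l < t * (m - 1) ∧ l + t ≤ t * m ∧ q = l / (t * (m - 1) : ℕ) ∧
      ((l + t : ℕ) : ℝ) = x * (t * m - (l + t) : ℕ) ∧ 0 ≤ x ∧ x ≤ 1 / g ∧
      1 / 2 ≤ 1 - τ * (m : ℝ) ^ k * (1 + ((m : ℝ) - 1) * q) ^ t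
        - τ * (1 + ((m : ℝ) - 1) * (1 - q)) ^ t - 2 * ((1 + ((m : ℝ) - 1) * p⁻¹) ^ n - 1) ∧
      1 / 72 ≤ (m : ℝ) ^ n * τ * q ^ t := by
  have hn' : (10 : ℝ) ≤ n := by exact_mod_cast hn
  have ht' : (1 : ℝ) ≤ t := by exact_mod_cast ht
  have htn : (t : ℝ) ≤ n := by exact_mod_cast (by omega : t ≤ n)
  have hm1' : 12 * (n : ℝ) ≤ m := by exact_mod_cast hm1
  have hm2' : (m : ℝ) ≤ n ^ 2 := by exact_mod_cast hm2
  have hmpos : (0 : ℝ) < m := by linarith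
  have hm1n : 1 ≤ m := by omega
  set w : ℝ := m / (1 + g) with hw
  have hw1 : (m : ℝ) ≤ 3 * w := by
    rw [hw, ← mul_div_assoc, le_div_iff₀ (by linarith)]; nlinarith
  have hw2 : 2 * w ≤ m := by
    rw [hw, ← mul_div_assoc, div_le_iff₀ (by linarith)]; nlinarith
  have hwg : w * (1 + g) = m := by rw [hw]; field_simp
  have hw0 : 0 < w := by linarith
  have hlam : τ * (m : ℝ) ^ n / (1 + g) ^ t = τ * (m : ℝ) ^ k * w ^ t := by
    rw [hw, div_pow, ← htk, pow_add]; ring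
  rw [hlam] at hlam1 hlam2
  clear hlam
  clear_value w
  clear hw
  set κ := ⌊t * w⌋₊ with hκ
  have hκ1 : (κ : ℝ) ≤ t * w := Nat.floor_le (by positivity)
  have hκ2 : t * w < κ + 1 := Nat.lt_floor_add_one _
  have hκt : t ≤ κ := by
    rw [hκ]
    refine Nat.le_floor ?_
    nlinarith
  have hκ3 : 2 * κ ≤ t * m := by
    have : 2 * (κ : ℝ) ≤ t * m := by nlinarith
    exact_mod_cast this
  have hκpos : 0 < κ := by omega
  have htmt : t * (m - 1) = t * m - t := by rw [Nat.mul_sub, mul_one]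
  have hlt : κ - t + t = κ := Nat.sub_add_cancel hκt
  have htm0 : t * m - κ ≠ 0 := by omega
  have hlc : ((κ - t : ℕ) : ℝ) = κ - t := by rw [Nat.cast_sub hκt]
  have hRc : ((t * (m - 1) : ℕ) : ℝ) = t * ((m : ℝ) - 1) := by
    rw [Nat.cast_mul, Nat.cast_sub hm1n, Nat.cast_one]
  have hmm : (0 : ℝ) < (m : ℝ) - 1 := by linarith
  set q : ℝ := ((κ : ℝ) - t) / (t * ((m : ℝ) - 1)) with hq
  have hq0 : 0 ≤ q := div_nonneg (by
    have : (t : ℝ) ≤ κ := by exact_mod_cast hκt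
    linarith) (by positivity)
  have hmq : ((m : ℝ) - 1) * q = κ / t - 1 := by
    rw [hq]; field_simp
  have hκt1 : (κ : ℝ) / t ≤ w := by rw [div_le_iff₀ (by linarith)]; linarith
  have hκt2 : w - 1 ≤ κ / t := by
    rw [le_div_iff₀ (by linarith)]; nlinarith
  refine ⟨κ - t, q, κ / (t * m - κ : ℕ), by omega, by omega, by rw [hRc, hlc], ?_, by positivity,
    ?_, ?_, ?_⟩
  · rw [hlt]
    have : ((t * m - κ : ℕ) : ℝ) ≠ 0 := by exact_mod_cast htm0
    field_simp
  · have h0 : (0 : ℝ) < (t * m - κ : ℕ) := by exact_mod_cast Nat.pos_of_ne_zero htm0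
    rw [div_le_div_iff₀ h0 (by linarith), Nat.cast_sub (by omega), Nat.cast_mul]
    nlinarith
  · have b1 : τ * (m : ℝ) ^ k * (1 + ((m : ℝ) - 1) * q) ^ t ≤ 1 / 12 := by
      refine le_trans ?_ hlam1
      have : 0 ≤ 1 + ((m : ℝ) - 1) * q := by positivity
      gcongr
      rw [hmq]; linarith
    have b2 : τ * (1 + ((m : ℝ) - 1) * (1 - q)) ^ t ≤ 2 / 12 := by
      have e : 1 + ((m : ℝ) - 1) * (1 - q) = m + 1 - κ / t := by
        rw [mul_sub, hmq]; ring
      rw [e]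
      have e2 : (m : ℝ) + 1 - κ / t ≤ (w * g) * (1 + 4 / m) := by
        have h1 : (m : ℝ) + 1 - κ / t ≤ w * g + 2 := by nlinarith
        have h2 : (2 : ℝ) ≤ (w * g) * (4 / m) := by
          rw [← mul_div_assoc, le_div_iff₀ hmpos]; nlinarith
        linarith
      have e3 : (1 + 4 / (m : ℝ)) ^ t ≤ 2 := by
        refine (pow_one_add_le_inv_one_sub (y := 1 / 3) (by
          have : (0 : ℝ) ≤ 4 / m := by positivity
          linarith) ?_ (by norm_num)).trans (by norm_num)
        rw [← mul_div_assoc, div_le_iff₀ hmpos]; linarith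
      have e4 : 0 ≤ (m : ℝ) + 1 - κ / t := by linarith
      calc τ * ((m : ℝ) + 1 - κ / t) ^ t ≤ τ * ((w * g) * (1 + 4 / m)) ^ t := by gcongr
        _ = (τ * (m : ℝ) ^ k * w ^ t) * (1 + 4 / (m : ℝ)) ^ t := by
            rw [mul_pow, mul_pow, hgt]; ring
        _ ≤ 1 / 12 * 2 := by gcongr
        _ = 2 / 12 := by norm_num
    have b3 : (1 + ((m : ℝ) - 1) * p⁻¹) ^ n ≤ 100 / 99 := by
      have hp0 : 0 < p := lt_of_lt_of_le (by positivity) hp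
      refine (pow_one_add_le_inv_one_sub (y := 1 / 100) (by
          have : (0 : ℝ) ≤ ((m : ℝ) - 1) * p⁻¹ := by positivity
          linarith) ?_ (by norm_num)).trans (by norm_num)
      rw [← div_eq_mul_inv, ← mul_div_assoc, div_le_iff₀ hp0]
      have h1 : (n : ℝ) * ((m : ℝ) - 1) ≤ n ^ 3 := by nlinarith
      have h2 : 100 * (n : ℝ) ^ 3 ≤ n ^ 5 := by
        have : (n : ℝ) ^ 5 = n ^ 2 * n ^ 3 := by ring
        rw [this]
        gcongr
        nlinarith
      linarith
    linarith
  · have e1 : w / m * (1 - 6 / m) ≤ q := by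
      have h1 : ((κ : ℝ) - t) / (t * m) ≤ q := by
        rw [hq]
        have : (t : ℝ) ≤ κ := by exact_mod_cast hκt
        gcongr
        · linarith
      refine le_trans ?_ h1
      have h3 : t * w - t - t ≤ (κ : ℝ) - t := by linarith
      have h2 : w / m * (1 - 6 / m) ≤ (t * w - t - t) / (t * m) := by
        rw [le_div_iff₀ (by positivity)]
        have : w / m * (1 - 6 / m) * (t * m) = t * (w - 6 * w / m) := by field_simp
        rw [this]
        have : 2 ≤ 6 * w / m := by rw [le_div_iff₀ hmpos]; linarith
        nlinarith
      refine h2.trans ?_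
      gcongr
    have e2 : (1 : ℝ) / 2 ≤ (1 - 6 / m) ^ t := by
      have h1 : 6 * (t : ℝ) / m ≤ 1 / 2 := by rw [div_le_iff₀ hmpos]; linarith
      have h2 : 6 / (m : ℝ) ≤ 1 / 2 := by rw [div_le_iff₀ hmpos]; linarith
      have h3 := one_add_mul_le_pow (a := -(6 / (m : ℝ))) (by linarith) t
      have h4 : 1 + (t : ℝ) * -(6 / m) = 1 - 6 * t / m := by ring
      rw [h4] at h3
      have h5 : 1 + -(6 / (m : ℝ)) = 1 - 6 / m := by ring
      rw [h5] at h3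
      linarith
    have h6 : 6 / (m : ℝ) ≤ 1 / 2 := by rw [div_le_iff₀ hmpos]; linarith
    have h7 : 0 ≤ 1 - 6 / (m : ℝ) := by linarith
    calc (1 : ℝ) / 72 = 1 / 36 * (1 / 2) := by norm_num
      _ ≤ (τ * (m : ℝ) ^ k * w ^ t) * (1 - 6 / m) ^ t := by gcongr
      _ = (m : ℝ) ^ n * τ * (w / m * (1 - 6 / m)) ^ t := by
          have hmt : (m : ℝ) ^ t ≠ 0 := by positivity
          generalize 1 - 6 / (m : ℝ) = u
          rw [mul_pow, div_pow, ← htk, pow_add]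
          field_simp
      _ ≤ _ := by gcongr

/-- The choice of the size of the alphabet. -/
lemma exists_alphabet_size {n k t : ℕ} {A L : ℝ} (htk : t + k = n) (ht : 1 ≤ t) (hn : 12 ≤ n)
    (hlog : 12 ≤ Real.log n) (hA : 4 * A ≤ n) (hkt : 2 * k * Real.log n ≤ t * Real.log 2)
    (hL1 : 3 / 2 * n * Real.log n - n ≤ L)
    (hL2 : L ≤ 3 / 2 * n * Real.log n + A * Real.log n + n + 1) :
    ∃ (m : ℕ) (g : ℝ), 12 * n ≤ m ∧ m ≤ n ^ 2 ∧ 1 ≤ g ∧ g ≤ 2 ∧ g ^ t = (m : ℝ) ^ k ∧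
      Real.exp (-L) * (m : ℝ) ^ n / (1 + g) ^ t ≤ 1 / 12 ∧
      1 / 36 ≤ Real.exp (-L) * (m : ℝ) ^ n / (1 + g) ^ t := by
  have hn' : (12 : ℝ) ≤ n := by exact_mod_cast hn
  have ht' : (1 : ℝ) ≤ t := by exact_mod_cast ht
  have hnpos : (0 : ℝ) < n := by linarith
  set gr : ℕ → ℝ := fun m => (m : ℝ) ^ ((k : ℝ) / t) with hgr
  set Λ : ℕ → ℝ := fun m => Real.exp (-L) * (m : ℝ) ^ n / (1 + gr m) ^ t with hΛ
  have hg0 : ∀ m, 0 ≤ gr m := fun m => by simp only [hgr]; positivity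
  have hg1 : ∀ m, 1 ≤ m → 1 ≤ gr m := fun m hm =>
    Real.one_le_rpow (by exact_mod_cast hm) (by positivity)
  have hg2 : ∀ m, 1 ≤ m → m ≤ n ^ 2 → gr m ≤ 2 := by
    intro m hm hmn
    have hm0 : (0 : ℝ) < m := by exact_mod_cast hm
    have hlm : Real.log m ≤ 2 * Real.log n := by
      have : (m : ℝ) ≤ n ^ 2 := by exact_mod_cast hmn
      calc Real.log m ≤ Real.log ((n : ℝ) ^ 2) := Real.log_le_log hm0 this
        _ = 2 * Real.log n := by rw [Real.log_pow]; norm_num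
    simp only [hgr]
    rw [Real.rpow_def_of_pos hm0, ← Real.le_log_iff_exp_le (by norm_num), ← mul_div_assoc,
      div_le_iff₀ (by linarith)]
    have hk0 : (0 : ℝ) ≤ k := by positivity
    nlinarith
  have hgt : ∀ m, gr m ^ t = (m : ℝ) ^ k := by
    intro m
    simp only [hgr]
    rw [← Real.rpow_natCast, ← Real.rpow_mul (by positivity), div_mul_cancel₀ _ (by linarith),
      Real.rpow_natCast]
  have hstart : Λ (12 * n) ≤ 1 / 12 := by
    have h1 : Λ (12 * n) ≤ Real.exp (-L) * ((12 * n : ℕ) : ℝ) ^ n := by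
      refine div_le_self (by positivity) (one_le_pow₀ ?_)
      linarith [hg0 (12 * n)]
    have h12 : (12 : ℝ) ≤ Real.exp 3 := by
      have : Real.exp 3 = Real.exp 1 ^ 3 := by rw [← Real.exp_nat_mul]; norm_num
      rw [this]
      have h : (2.7 : ℝ) ≤ Real.exp 1 := by linarith [Real.exp_one_gt_d9]
      calc (12 : ℝ) ≤ 2.7 ^ 3 := by norm_num
        _ ≤ _ := by gcongr
    have h2 : ((12 * n : ℕ) : ℝ) ^ n ≤ Real.exp (n * (3 + Real.log n)) := by
      rw [Real.exp_nat_mul, Real.exp_add, Real.exp_log hnpos]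
      push_cast
      gcongr
    calc Λ (12 * n) ≤ Real.exp (-L) * Real.exp (n * (3 + Real.log n)) :=
          h1.trans (by gcongr)
      _ = Real.exp (-L + n * (3 + Real.log n)) := by rw [Real.exp_add]
      _ ≤ Real.exp (-24) := by
          refine Real.exp_le_exp.mpr ?_
          nlinarith
      _ ≤ 1 / 12 := by
          rw [Real.exp_neg, ← one_div]
          refine one_div_le_one_div_of_le (by norm_num) ?_
          linarith [Real.add_one_le_exp (24 : ℝ)]
  have hn2 : 12 * n ≤ n ^ 2 := by nlinarith
  have hend : 1 / 12 < Λ (n ^ 2) := by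
    have h3 : (3 : ℝ) ≤ Real.exp 2 := by linarith [Real.add_one_le_exp (2 : ℝ)]
    have h1 : (1 + gr (n ^ 2)) ^ t ≤ Real.exp (n * 2) := by
      rw [Real.exp_nat_mul]
      have hg := hg2 (n ^ 2) (by nlinarith) le_rfl
      calc (1 + gr (n ^ 2)) ^ t ≤ Real.exp 2 ^ t := by
            have := hg0 (n ^ 2)
            gcongr
            linarith
        _ ≤ Real.exp 2 ^ n := pow_le_pow_right₀ (by linarith) (by omega)
    have h2 : (((n ^ 2 : ℕ) : ℝ)) ^ n = Real.exp (n * (2 * Real.log n)) := by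
      rw [Real.exp_nat_mul, two_mul, Real.exp_add, Real.exp_log hnpos]
      push_cast
      ring
    have hpos : 0 < (1 + gr (n ^ 2)) ^ t := by
      have := hg0 (n ^ 2)
      positivity
    have hbase : (1 : ℝ) / 12 < Real.exp (-1) := by
      rw [Real.exp_neg, ← one_div]
      refine one_div_lt_one_div_of_lt (Real.exp_pos 1) ?_
      linarith [Real.exp_one_lt_d9]
    rw [hΛ]
    simp only
    rw [lt_div_iff₀ hpos, h2]
    calc 1 / 12 * (1 + gr (n ^ 2)) ^ t < Real.exp (-1) * (1 + gr (n ^ 2)) ^ t := by gcongr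
      _ ≤ Real.exp (-1) * Real.exp (n * 2) := by gcongr
      _ = Real.exp (-1 + n * 2) := by rw [Real.exp_add]
      _ ≤ Real.exp (-L + n * (2 * Real.log n)) := by
          refine Real.exp_le_exp.mpr ?_
          nlinarith
      _ = _ := by rw [Real.exp_add]
  obtain ⟨m, hm1, hm2, hm3, hm4⟩ :
      ∃ m, 12 * n ≤ m ∧ m < n ^ 2 ∧ Λ m ≤ 1 / 12 ∧ 1 / 12 < Λ (m + 1) := by
    by_contra! hcon
    have : ∀ m, 12 * n ≤ m → m ≤ n ^ 2 → Λ m ≤ 1 / 12 := by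
      intro m hm
      induction m, hm using Nat.le_induction with
      | base => exact fun _ => hstart
      | succ m hm ih => exact fun h => hcon m hm (by omega) (ih (by omega))
    exact absurd (this _ hn2 le_rfl) (not_le.mpr hend)
  have hm0 : (0 : ℝ) < m := by
    have : 0 < m := by omega
    exact_mod_cast this
  refine ⟨m, gr m, hm1, hm2.le, hg1 m (by omega), hg2 m (by omega) hm2.le, hgt m, hm3, ?_⟩
  have hmono : gr m ≤ gr (m + 1) := by
    simp only [hgr]
    exact Real.rpow_le_rpow hm0.le (by push_cast; linarith) (by positivity)
  have hratio : Λ (m + 1) ≤ 3 * Λ m := by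
    have h1 : (1 + 1 / (m : ℝ)) ^ n ≤ 3 := by
      refine (pow_one_add_le_inv_one_sub (y := 1 / 12) (by
        have : 0 < 1 / (m : ℝ) := by positivity
        linarith) ?_ (by norm_num)).trans (by norm_num)
      have : 12 * (n : ℝ) ≤ m := by exact_mod_cast hm1
      rw [mul_one_div, div_le_iff₀ hm0]
      linarith
    have h2 : ((m + 1 : ℕ) : ℝ) ^ n ≤ 3 * (m : ℝ) ^ n := by
      have e : ((m + 1 : ℕ) : ℝ) = (1 + 1 / (m : ℝ)) * m := by
        push_cast; field_simp
      rw [e, mul_pow]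
      gcongr
    have := hg0 m
    calc Λ (m + 1) ≤ Real.exp (-L) * (3 * (m : ℝ) ^ n) / (1 + gr m) ^ t := by
          simp only [hΛ]
          gcongr
      _ = 3 * Λ m := by simp only [hΛ]; ring
  have h : (1 : ℝ) / 36 ≤ Λ m := by linarith
  exact h

lemma nwGamma_add_one_mul {μ : ℝ} (hμ1 : μ < 1) : (1 + nwGamma μ) * (1 - μ) = 5 + μ := by
  have h : 1 - (μ + (1 - μ) / 2) ≠ 0 := by
    have : 1 - (μ + (1 - μ) / 2) = (1 - μ) / 2 := by ring
    rw [this]; linarith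
  have h2 : nwGamma μ * (1 - (μ + (1 - μ) / 2)) = 2 * (μ + (1 - μ) / 2) + 1 :=
    div_mul_cancel₀ _ h
  linear_combination 2 * h2

lemma five_le_nwGamma_add_one {μ : ℝ} (hμ0 : 0 ≤ μ) (hμ1 : μ < 1) : 5 ≤ 1 + nwGamma μ := by
  have h := nwGamma_add_one_mul hμ1
  by_contra! hc
  nlinarith

/-- Bounds for the logarithm of the index of the code underlying the Nisan–Wigderson
polynomial. -/
lemma nw_codim_bounds {μ : ℝ} (hμ0 : 0 ≤ μ) (hμ1 : μ < 1) {n p : ℕ} (hlog : 1 ≤ Real.log n)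
    (h1 : (n : ℝ) ^ (1 + nwGamma μ) ≤ p) (h2 : (p : ℝ) ≤ 2 * (n : ℝ) ^ (1 + nwGamma μ)) :
    ⌊nwDreal μ n (n * p)⌋₊ ≤ n ∧
    3 / 2 * n * Real.log n - n ≤ ((n : ℝ) - ⌊nwDreal μ n (n * p)⌋₊) * Real.log p ∧
    ((n : ℝ) - ⌊nwDreal μ n (n * p)⌋₊) * Real.log p
      ≤ 3 / 2 * n * Real.log n + (1 + nwGamma μ) * Real.log n + n + 1 := by
  have hA := nwGamma_add_one_mul hμ1
  have hA5 := five_le_nwGamma_add_one hμ0 hμ1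
  have hn1 : (1 : ℝ) < n := by
    by_contra! h
    have := Real.log_nonpos (Nat.cast_nonneg n) h
    linarith
  have hn0 : (0 : ℝ) < n := by linarith
  have hpow : 0 < (n : ℝ) ^ (1 + nwGamma μ) := Real.rpow_pos_of_pos hn0 _
  have hp0 : (0 : ℝ) < p := by linarith
  obtain ⟨A, hAdef⟩ : ∃ A, A = 1 + nwGamma μ := ⟨_, rfl⟩
  have hγ : nwGamma μ = A - 1 := by linarith
  have hl1 : A * Real.log n ≤ Real.log p := by
    rw [hAdef, ← Real.log_rpow hn0]
    exact Real.log_le_log hpow h1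
  have hl2 : Real.log p ≤ A * Real.log n + Real.log 2 := by
    rw [hAdef, ← Real.log_rpow hn0, add_comm, ← Real.log_mul (by norm_num) hpow.ne']
    exact Real.log_le_log hp0 h2
  rw [← hAdef] at hA hA5 ⊢
  have hlog2 : Real.log 2 < 1 := by linarith [Real.log_two_lt_d9]
  have hlogN : Real.log ((n * p : ℕ) : ℝ) = Real.log n + Real.log p := by
    rw [Nat.cast_mul, Real.log_mul hn0.ne' hp0.ne']
  obtain ⟨ε, hε⟩ : ∃ ε, ε = Real.log p - A * Real.log n := ⟨_, rfl⟩
  have hε0 : 0 ≤ ε := by linarith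
  have hε1 : ε ≤ 1 := by linarith
  have hlp : Real.log p = A * Real.log n + ε := by linarith
  have hln : (0 : ℝ) < Real.log n := by linarith
  have hD : nwDreal μ n (n * p) =
      n - 3 * n / (2 * A) + (1 + μ) / 2 * (ε / Real.log n) * n / (2 * A) := by
    have hA2 : A * ((1 + μ) / 2) = A - 2 - (1 + μ) / 2 := by linarith
    have key : A - 1 + (1 + μ) / 2 * (Real.log n + (A * Real.log n + ε)) / Real.log n
        = 2 * A - 3 + (1 + μ) / 2 * (ε / Real.log n) := by
      field_simp
      linear_combination (2 * Real.log n) * hA2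
    have hμ : μ + (1 - μ) / 2 = (1 + μ) / 2 := by ring
    rw [nwDreal, ← hAdef, hlogN, hγ, hlp, hμ, key]
    field_simp
  have hεl : ε / Real.log n ≤ 1 := by rw [div_le_one hln]; linarith
  have hεl0 : 0 ≤ ε / Real.log n := by positivity
  have hA0 : 0 < A := by linarith
  have hsmall : (1 + μ) / 2 * (ε / Real.log n) * n / (2 * A) ≤ 3 * n / (2 * A) := by
    gcongr
    nlinarith
  have hsmall0 : 0 ≤ (1 + μ) / 2 * (ε / Real.log n) * n / (2 * A) := by positivity
  have hn3 : 3 * n / (2 * A) ≤ n := by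
    rw [div_le_iff₀ (by positivity)]; nlinarith
  have hD0 : 0 ≤ nwDreal μ n (n * p) := by rw [hD]; linarith
  have hf1 := Nat.floor_le hD0
  have hf2 := Nat.lt_floor_add_one (nwDreal μ n (n * p))
  have hlp0 : 0 ≤ Real.log p := by rw [hlp]; positivity
  refine ⟨?_, ?_, ?_⟩
  · have : ((⌊nwDreal μ n (n * p)⌋₊ : ℕ) : ℝ) ≤ n := by rw [hD] at hf1 ⊢; linarith
    exact_mod_cast this
  · calc 3 / 2 * n * Real.log n - n
        ≤ 3 / 2 * n * Real.log n - (1 + μ) / 2 * ε * n / 2 := by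
          have : (1 + μ) / 2 * ε ≤ 1 := by nlinarith
          nlinarith
      _ = (3 * n / (2 * A) - (1 + μ) / 2 * (ε / Real.log n) * n / (2 * A))
            * (A * Real.log n) := by field_simp
      _ ≤ (3 * n / (2 * A) - (1 + μ) / 2 * (ε / Real.log n) * n / (2 * A)) * Real.log p :=
          mul_le_mul_of_nonneg_left hl1 (by linarith)
      _ ≤ _ := mul_le_mul_of_nonneg_right (by linarith) hlp0
  · calc ((n : ℝ) - ⌊nwDreal μ n (n * p)⌋₊) * Real.log p
        ≤ (3 * n / (2 * A) + 1) * Real.log p := mul_le_mul_of_nonneg_right (by linarith) hlp0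
      _ ≤ (3 * n / (2 * A) + 1) * (A * Real.log n + 1) := by
          apply mul_le_mul_of_nonneg_left (by linarith) (by positivity)
      _ = 3 / 2 * n * Real.log n + A * Real.log n + 3 * n / (2 * A) + 1 := by
          field_simp
          ring
      _ ≤ _ := by linarith

/-- The number of variables in a factor is small compared with the field size. -/
lemma mul_rpow_div_le {μ : ℝ} (hμ1 : μ < 1) {n p m : ℕ} (hn : 1 ≤ n) (hm : m ≤ n ^ 2)
    (h1 : (n : ℝ) ^ (1 + nwGamma μ) ≤ p) :
    (m : ℝ) * ((n * p : ℕ) : ℝ) ^ μ / p ≤ ((n : ℝ) ^ 3)⁻¹ := by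
  have hn0 : (0 : ℝ) < n := by exact_mod_cast hn
  have hp0 : (0 : ℝ) < p := (Real.rpow_pos_of_pos hn0 _).trans_le h1
  have hN0 : (0 : ℝ) < n * p := by positivity
  have h6 : (n : ℝ) ^ 6 ≤ ((n : ℝ) * p) ^ (1 - μ) := by
    calc (n : ℝ) ^ 6 = ((n : ℝ) ^ (1 + (1 + nwGamma μ))) ^ (1 - μ) := by
          rw [← Real.rpow_mul hn0.le, ← Real.rpow_natCast]
          congr 1
          push_cast
          linarith [nwGamma_add_one_mul hμ1]
      _ ≤ ((n : ℝ) * p) ^ (1 - μ) := by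
          apply Real.rpow_le_rpow (by positivity) _ (by linarith)
          rw [Real.rpow_add hn0, Real.rpow_one]
          gcongr
  have hm' : (m : ℝ) ≤ n ^ 2 := by exact_mod_cast hm
  have hsplit : ((n : ℝ) * p) ^ μ * ((n : ℝ) * p) ^ (1 - μ) = n * p := by
    rw [← Real.rpow_add hN0]; simp
  have hμ0 : 0 < ((n : ℝ) * p) ^ μ := Real.rpow_pos_of_pos hN0 _
  rw [Nat.cast_mul, div_le_iff₀ hp0, ← div_eq_inv_mul, le_div_iff₀ (by positivity)]
  have h7 : ((n : ℝ) * p) ^ μ * n ^ 6 ≤ n * p := by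
    calc ((n : ℝ) * p) ^ μ * n ^ 6 ≤ ((n : ℝ) * p) ^ μ * ((n : ℝ) * p) ^ (1 - μ) := by gcongr
      _ = n * p := hsplit
  have h8 : ((n : ℝ) * p) ^ μ * n ^ 5 ≤ p := by
    apply le_of_mul_le_mul_left _ hn0
    calc (n : ℝ) * (((n : ℝ) * p) ^ μ * n ^ 5) = ((n : ℝ) * p) ^ μ * n ^ 6 := by ring
      _ ≤ _ := h7
  calc (m : ℝ) * ((n : ℝ) * p) ^ μ * n ^ 3 ≤ (n : ℝ) ^ 2 * ((n : ℝ) * p) ^ μ * n ^ 3 := by gcongr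
    _ = ((n : ℝ) * p) ^ μ * n ^ 5 := by ring
    _ ≤ _ := h8

/-- The contribution of the factors that survive the restriction is small. -/
lemma pow_le_rpow_neg {n t k e m : ℕ} {x g : ℝ} (hn : 1 ≤ n) (hnm : n ≤ m) (hx0 : 0 ≤ x)
    (hg1 : 1 ≤ g) (hxg : x ≤ 1 / g) (hgt : g ^ t = (m : ℝ) ^ k) (he : t ≤ 2 * e) :
    x ^ e ≤ (n : ℝ) ^ (-(k / 2 : ℝ)) := by
  have hn0 : (0 : ℝ) < n := by exact_mod_cast hn
  have hg0 : 0 < g := by linarith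
  have hsq : ((n : ℝ) ^ (-(k / 2 : ℝ))) ^ 2 = ((n : ℝ) ^ k)⁻¹ := by
    rw [← Real.rpow_natCast, ← Real.rpow_mul hn0.le, ← Real.rpow_natCast _ k,
      ← Real.rpow_neg hn0.le]
    congr 1
    push_cast
    ring
  have hx1 : x ≤ 1 := hxg.trans (by rw [div_le_one hg0]; exact hg1)
  refine le_of_sq_le_sq ?_ (by positivity)
  rw [hsq, ← pow_mul, mul_comm]
  calc x ^ (2 * e) ≤ x ^ t := pow_le_pow_of_le_one hx0 hx1 he
    _ ≤ (1 / g) ^ t := pow_le_pow_left₀ hx0 hxg t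
    _ = ((m : ℝ) ^ k)⁻¹ := by rw [one_div, inv_pow, hgt]
    _ ≤ ((n : ℝ) ^ k)⁻¹ := by gcongr

/-- The lower bound for one sufficiently large value of `n`. -/
lemma nw_size_lower_bound {F : Type*} [Field F] [CharZero F] {μ : ℝ} (hμ0 : 0 ≤ μ) (hμ1 : μ < 1)
    {n p : ℕ} [Fact p.Prime] (hlog : 12 ≤ Real.log n) (hn : 432 ≤ n) (hS : 74 ≤ Real.sqrt n)
    (hlogS : Real.log n ≤ Real.sqrt n) (hA : 4 * (1 + nwGamma μ) ≤ n)
    (h1 : (n : ℝ) ^ (1 + nwGamma μ) ≤ p) (h2 : (p : ℝ) ≤ 2 * (n : ℝ) ^ (1 + nwGamma μ))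
    {T d : ℕ} (hd : 1 ≤ d) (Q : Fin T → Fin d → MvPolynomial (Fin n × ZMod p) F)
    (hv : ∀ i j, ((Q i j).vars.card : ℝ) ≤ ((n * p : ℕ) : ℝ) ^ μ)
    (hQ : ∑ c : Fin ⌊nwDreal μ n (n * p)⌋₊ → ZMod p,
      ∏ i, (X (i, powCode p n _ c i) : MvPolynomial (Fin n × ZMod p) F) = ∑ i, ∏ j, Q i j) :
    (n : ℝ) ^ (1 / 16 * Real.sqrt n) ≤ (T * d : ℕ) := by
  obtain ⟨hD, hL1, hL2⟩ := nw_codim_bounds hμ0 hμ1 (by linarith) h1 h2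
  generalize ⌊nwDreal μ n (n * p)⌋₊ = D at hD hL1 hL2 hQ
  have hA5 := five_le_nwGamma_add_one hμ0 hμ1
  have hn' : (432 : ℝ) ≤ n := by exact_mod_cast hn
  have hp0 : (0 : ℝ) < p := by exact_mod_cast (Fact.out : p.Prime).pos
  have hp5 : (n : ℝ) ^ 5 ≤ p := by
    refine le_trans ?_ h1
    rw [← Real.rpow_natCast]
    exact Real.rpow_le_rpow_of_exponent_le (by linarith) (by exact_mod_cast hA5)
  have hnp : n ≤ p := by
    have : (n : ℝ) ≤ p := (le_self_pow₀ (by linarith) (by norm_num)).trans hp5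
    exact_mod_cast this
  obtain ⟨s, hs⟩ : ∃ s, s = Nat.sqrt n := ⟨_, rfl⟩
  obtain ⟨k, hk⟩ : ∃ k, k = s / 4 := ⟨_, rfl⟩
  obtain ⟨t, ht⟩ : ∃ t, t = n - k := ⟨_, rfl⟩
  have hsS : (s : ℝ) ≤ Real.sqrt n := by rw [hs]; exact Real.nat_sqrt_le_real_sqrt
  have hSs : Real.sqrt n ≤ s + 1 := by rw [hs]; exact Real.real_sqrt_le_nat_sqrt_succ
  have hSS : Real.sqrt n * Real.sqrt n = n := Real.mul_self_sqrt (by linarith)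
  have hss : s * s ≤ n := hs ▸ Nat.sqrt_le n
  have h4k : 4 * k ≤ s := by omega
  have hks : (s : ℝ) ≤ 4 * k + 3 := by exact_mod_cast (by omega : s ≤ 4 * k + 3)
  have hsk : 4 * (s * k) ≤ n := by nlinarith
  have hsn : s ≤ n := hs ▸ Nat.sqrt_le_self n
  have htk : t + k = n := by omega
  have ht1 : 1 ≤ t := by omega
  have h4k' : 4 * (k : ℝ) ≤ s := by exact_mod_cast h4k
  have ht34 : 3 / 4 * (n : ℝ) ≤ t := by
    have : 3 * n ≤ 4 * t := by omega
    have : 3 * (n : ℝ) ≤ 4 * t := by exact_mod_cast this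
    linarith
  have hkt : 2 * k * Real.log n ≤ t * Real.log 2 := by
    have hlog2 := Real.log_two_gt_d9
    calc 2 * k * Real.log n ≤ (Real.sqrt n / 2) * Real.sqrt n := by
          apply mul_le_mul (by linarith) hlogS (by linarith) (by positivity)
      _ = n / 2 := by rw [div_mul_eq_mul_div, hSS]
      _ ≤ (3 / 4 * n) * (0.69) := by linarith
      _ ≤ t * Real.log 2 := by apply mul_le_mul ht34 (by linarith) (by norm_num) (by positivity)
  obtain ⟨m, g, hm1, hm2, hg1, hg2, hgt, hlam1, hlam2⟩ :=
    exists_alphabet_size htk ht1 (by omega) hlog hA hkt hL1 hL2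
  have hτ : Real.exp (-(((n : ℝ) - D) * Real.log p)) = (p : ℝ) ^ D / (p : ℝ) ^ n := by
    rw [show -(((n : ℝ) - D) * Real.log p) = D * Real.log p - n * Real.log p by ring,
      Real.exp_sub, mul_comm, mul_comm (n : ℝ), ← Real.rpow_def_of_pos hp0,
      ← Real.rpow_def_of_pos hp0, Real.rpow_natCast, Real.rpow_natCast]
  obtain ⟨l, q, x, hl, hlt, hq, hx, hx0, hxg, hbr, hmass⟩ :=
    exists_isolating_parameters htk ht1 (by omega) hm1 hm2 hp5 hg1 hg2 hgt (Real.exp_pos _).le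
      hlam1 hlam2
  have hx1 : x ≤ 1 := hxg.trans (by rw [div_le_one (by linarith)]; exact hg1)
  have hrk : s * k ≤ n - k := by omega
  subst ht
  have hmain := size_lower_bound hnp hD Q hQ _ hv (by omega : k ≤ n) (by omega : 1 ≤ m) hrk hl
    q _ x hq hτ hx hx1 (by linarith)
  have hB := pow_le_rpow_neg (e := n - k - s * k) (by omega : 1 ≤ n) (by omega : n ≤ m) hx0 hg1
    hxg hgt (by omega)
  set B : ℝ := (n : ℝ) ^ (-(k / 2 : ℝ)) with hBdef
  have hB0 : 0 < B := Real.rpow_pos_of_pos (by linarith) _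
  have hfirst : ((m : ℝ) * ((n * p : ℕ) : ℝ) ^ μ / p) ^ s ≤ B := by
    calc ((m : ℝ) * ((n * p : ℕ) : ℝ) ^ μ / p) ^ s ≤ (((n : ℝ) ^ 3)⁻¹) ^ s :=
          pow_le_pow_left₀ (by positivity) (mul_rpow_div_le hμ1 (by omega) hm2 h1) s
      _ = (n : ℝ) ^ (-(3 * s : ℝ)) := by
          rw [Real.rpow_neg (by linarith), inv_pow, ← pow_mul, ← Real.rpow_natCast]
          push_cast
          rfl
      _ ≤ B := Real.rpow_le_rpow_of_exponent_le (by linarith) (by linarith)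
  have hcount : (l : ℝ) + s * k + 1 ≤ 2 * n ^ 3 := by
    have h3 : (n - k) * m ≤ n ^ 3 := by
      calc (n - k) * m ≤ n * n ^ 2 := Nat.mul_le_mul (by omega) hm2
        _ = n ^ 3 := by ring
    have h4 : n ≤ n ^ 3 := Nat.le_self_pow (by norm_num) n
    have : l + s * k + 1 ≤ 2 * n ^ 3 := by omega
    exact_mod_cast this
  have hTd : (T : ℝ) ≤ T * d := by
    exact_mod_cast Nat.le_mul_of_pos_right T hd
  have hlow : (1 / 144 : ℝ) ≤ T * d * (3 * n ^ 3 * B) := by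
    calc (1 / 144 : ℝ) = 1 / 72 * (1 / 2) := by norm_num
      _ ≤ _ := mul_le_mul hmass hbr (by norm_num) (by linarith)
      _ ≤ _ := hmain
      _ ≤ T * d * B + T * d * (2 * n ^ 3 * B) := by
          gcongr
      _ = T * d * ((1 + 2 * n ^ 3) * B) := by ring
      _ ≤ T * d * (3 * n ^ 3 * B) := by
          have : (1 : ℝ) ≤ n ^ 3 := one_le_pow₀ (by linarith)
          gcongr
          linarith
  push_cast
  have hfin : (n : ℝ) ^ (1 / 16 * Real.sqrt n) * (432 * (n ^ 3 * B)) ≤ 1 := by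
    calc (n : ℝ) ^ (1 / 16 * Real.sqrt n) * (432 * (n ^ 3 * B))
        ≤ (n : ℝ) ^ (1 / 16 * Real.sqrt n) * (n * (n ^ 3 * B)) := by gcongr
      _ = (n : ℝ) ^ (1 / 16 * Real.sqrt n + 4 + -(k / 2 : ℝ)) := by
          rw [Real.rpow_add (by linarith), Real.rpow_add (by linarith),
            show (4 : ℝ) = (4 : ℕ) by norm_num, Real.rpow_natCast]
          ring
      _ ≤ 1 := Real.rpow_le_one_of_one_le_of_nonpos (by linarith) (by linarith)
  have hpos : 0 < 432 * ((n : ℝ) ^ 3 * B) := by positivity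
  refine le_of_mul_le_mul_right (hfin.trans ?_) hpos
  linarith

/-- Over a field of characteristic zero, for every constant `0 ≤ μ < 1`
there are constants `c > 0` and `n₀` (depending only on `μ`) such that for every `n ≥ n₀`,
with `ψ` the smallest prime in `[n^{1+γ}, 2n^{1+γ}]` and `N = n·ψ` the number of variables,
any representation `NW_{n,μ} = ∑_{i=1}^T ∏_{j=1}^d Q_{ij}` in which every `Q_{ij}` depends
on at most `N^μ` variables satisfies `T·d ≥ n^{c·√n}`. -/
theorem stmt0 (F : Type*) [Field F] [CharZero F] (μ : ℝ) (hμ0 : 0 ≤ μ) (hμ1 : μ < 1) :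
    ∃ c : ℝ, 0 < c ∧ ∃ n₀ : ℕ, ∀ n : ℕ, n₀ ≤ n →
      ∀ (ψ : ℕ) [NeZero ψ], ψ.Prime →
        (n : ℝ) ^ (1 + nwGamma μ) ≤ (ψ : ℝ) →
        (ψ : ℝ) ≤ 2 * (n : ℝ) ^ (1 + nwGamma μ) →
        (∀ ψ' : ℕ, ψ'.Prime → (n : ℝ) ^ (1 + nwGamma μ) ≤ (ψ' : ℝ) →
          (ψ' : ℝ) ≤ 2 * (n : ℝ) ^ (1 + nwGamma μ) → ψ ≤ ψ') →
        ∀ (T d : ℕ) (Q : Fin T → Fin d → MvPolynomial (Fin n × ZMod ψ) F),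
          (∀ i j, ((Q i j).vars.card : ℝ) ≤ ((n * ψ : ℕ) : ℝ) ^ μ) →
          NWpoly F μ n ψ = ∑ i, ∏ j, Q i j →
          (n : ℝ) ^ (c * Real.sqrt n) ≤ ((T * d : ℕ) : ℝ) := by
  classical
  have hev : ∀ᶠ n : ℕ in Filter.atTop, 12 ≤ Real.log n ∧ 432 ≤ n ∧ 74 ≤ Real.sqrt n ∧
      Real.log n ≤ Real.sqrt n ∧ 4 * (1 + nwGamma μ) ≤ n := by
    have hcast := tendsto_natCast_atTop_atTop (R := ℝ)
    have hlit : ∀ᶠ x : ℝ in Filter.atTop, Real.log x ≤ Real.sqrt x := by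
      filter_upwards [(isLittleO_log_rpow_atTop (r := 1 / 2) (by norm_num)).bound one_pos,
        Filter.eventually_ge_atTop 1] with x hx hx1
      rw [one_mul, ← Real.sqrt_eq_rpow, Real.norm_eq_abs, Real.norm_eq_abs,
        abs_of_nonneg (Real.sqrt_nonneg x)] at hx
      exact (le_abs_self _).trans hx
    filter_upwards [(Real.tendsto_log_atTop.comp hcast).eventually_ge_atTop 12,
      Filter.eventually_ge_atTop 432,
      (Real.tendsto_sqrt_atTop.comp hcast).eventually_ge_atTop 74,
      hcast.eventually hlit, hcast.eventually_ge_atTop (4 * (1 + nwGamma μ))]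
      with n h1 h2 h3 h4 h5
    exact ⟨h1, h2, h3, h4, h5⟩
  obtain ⟨n₀, hn₀⟩ := Filter.eventually_atTop.mp hev
  refine ⟨1 / 16, by norm_num, n₀, fun n hn ψ _ hψ h1 h2 _ T d Q hv hQ => ?_⟩
  obtain ⟨hlog, hn432, hS, hlogS, hA⟩ := hn₀ n hn
  have : Fact ψ.Prime := ⟨hψ⟩
  have key : ∀ {T' d' : ℕ} (_ : 1 ≤ d') (Q' : Fin T' → Fin d' → MvPolynomial (Fin n × ZMod ψ) F),
      (∀ i j, ((Q' i j).vars.card : ℝ) ≤ ((n * ψ : ℕ) : ℝ) ^ μ) →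
      NWpoly F μ n ψ = ∑ i, ∏ j, Q' i j →
      (n : ℝ) ^ (1 / 16 * Real.sqrt n) ≤ ((T' * d' : ℕ) : ℝ) := by
    intro T' d' hd' Q' hv' hQ'
    refine nw_size_lower_bound hμ0 hμ1 hlog hn432 hS hlogS hA h1 h2 hd' Q' hv' ?_
    rw [← hQ']
    unfold NWpoly powCode
    congr!
  rcases Nat.eq_zero_or_pos d with rfl | hd
  · have h := key (T' := 1) le_rfl (fun _ _ => C (T : F))
      (fun _ _ => by rw [vars_C, Finset.card_empty, Nat.cast_zero]; positivity)
      (by rw [hQ]; simp)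
    have hn1 : (1 : ℝ) < n := by
      have : (432 : ℝ) ≤ n := by exact_mod_cast hn432
      linarith
    have h' := Real.one_lt_rpow hn1 (by positivity : 0 < 1 / 16 * Real.sqrt n)
    norm_num at h h'
    linarith
  · exact key hd Q hv hQ
end

section
/- Let c > 0 and 0 ≤ μ < 1/2 be constants and let F be a field of characteristic zero. For each N, let C_N be the set of polynomials P in N variables over F with individual degree at most k in every variable that can be written as P = ∑_{i=1}^{T} ∏_{j=1}^{d} Q_{ij} with T < (log N)^c, k < (log N)^c, d < N^c, and each Q_{ij} depending on at most N^μ variables. Then there exists a constant ε < 1, depending only on c and μ, such that for all sufficiently large N there is a finite set H ⊆ F^N with |H| ≤ exp(N^ε) such that for every nonzero P ∈ C_N there is a point p ∈ H with P(p) ≠ 0. -/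
open MvPolynomial

/-- Fewer than `2 ^ t` sets, each covering at most half of `G`, can be avoided by `t` points. -/
theorem exists_hitting_finset_of_card_lt {G : Type*} [Fintype G] [DecidableEq G] [Nonempty G]
    (t : ℕ) :
    ∀ 𝒵 : Finset (Finset G), (∀ Z ∈ 𝒵, 2 * Z.card ≤ Fintype.card G) → 𝒵.card < 2 ^ t →
      ∃ H : Finset G, H.card ≤ t ∧ ∀ Z ∈ 𝒵, ∃ p ∈ H, p ∉ Z := by
  induction t with
  | zero =>
    intro 𝒵 _ h
    have : 𝒵 = ∅ := by simpa using h
    exact ⟨∅, by simp, by simp [this]⟩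
  | succ t ih =>
    intro 𝒵 hZ h
    have key : ∑ p : G, 2 * (𝒵.filter (p ∈ ·)).card ≤ ∑ p : G, 𝒵.card := by
      have hcount : ∑ p : G, (𝒵.filter (p ∈ ·)).card = ∑ Z ∈ 𝒵, Z.card := by
        have := Finset.sum_card_bipartiteAbove_eq_sum_card_bipartiteBelow
          (s := (Finset.univ : Finset G)) (t := 𝒵) (fun p Z => p ∈ Z)
        simpa [Finset.bipartiteAbove, Finset.bipartiteBelow] using this
      rw [← Finset.mul_sum, hcount, Finset.mul_sum]
      calc ∑ Z ∈ 𝒵, 2 * Z.card ≤ ∑ Z ∈ 𝒵, Fintype.card G := Finset.sum_le_sum hZ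
        _ = ∑ p : G, 𝒵.card := by simp [mul_comm]
    obtain ⟨p, -, hp⟩ := Finset.exists_le_of_sum_le Finset.univ_nonempty key
    obtain ⟨H, hH, hH'⟩ := ih (𝒵.filter (p ∈ ·))
      (fun Z hZ' => hZ Z (Finset.mem_filter.1 hZ').1) (by rw [pow_succ] at h; omega)
    refine ⟨insert p H, (Finset.card_insert_le _ _).trans (by omega), fun Z hZ' => ?_⟩
    by_cases hpZ : p ∈ Z
    · obtain ⟨q, hq, hqZ⟩ := hH' Z (Finset.mem_filter.2 ⟨hZ', hpZ⟩)
      exact ⟨q, Finset.mem_insert_of_mem hq, hqZ⟩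
    · exact ⟨p, Finset.mem_insert_self _ _, hpZ⟩

theorem card_le_of_linearIndependent_of_degreeOf_le {σ F ι : Type*} [Fintype σ] [Field F]
    [Fintype ι]
    (D : ℕ) (g : ι → MvPolynomial σ F) (hg : LinearIndependent F g)
    (hD : ∀ i x, (g i).degreeOf x ≤ D) :
    Fintype.card ι ≤ (D + 1) ^ Fintype.card σ := by
  classical
  let W : Finset (MvPolynomial σ F) := Finset.univ.image fun e : σ → Fin (D + 1) =>
    monomial (Finsupp.equivFunOnFinite.symm fun x => (e x : ℕ)) (1 : F)
  have hmem : ∀ i, g i ∈ Submodule.span F (W : Set (MvPolynomial σ F)) := by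
    intro i
    rw [(g i).as_sum]
    refine Submodule.sum_mem _ fun m hm => ?_
    have : monomial m (coeff m (g i)) = coeff m (g i) • monomial m (1 : F) := by
      simp [smul_monomial]
    rw [this]
    refine Submodule.smul_mem _ _ (Submodule.subset_span ?_)
    simp only [W, Finset.coe_image, Finset.coe_univ, Set.image_univ, Set.mem_range]
    refine ⟨fun x => ⟨m x, Nat.lt_succ_of_le
      ((monomial_le_degreeOf x hm).trans (hD i x))⟩, ?_⟩
    congr 1
    ext x
    simp
  let g' : ι → Submodule.span F (W : Set (MvPolynomial σ F)) := fun i => ⟨g i, hmem i⟩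
  have hg' : LinearIndependent F g' :=
    LinearIndependent.of_comp (Submodule.subtype _) hg
  calc Fintype.card ι ≤ Module.finrank F (Submodule.span F (W : Set (MvPolynomial σ F))) :=
        hg'.fintype_card_le_finrank
    _ ≤ W.card := finrank_span_finset_le_card W
    _ ≤ Fintype.card (σ → Fin (D + 1)) := Finset.card_image_le
    _ = (D + 1) ^ Fintype.card σ := by simp

open Classical in
/-- A bound on the number of zero patterns of a finite family of polynomials, obtained from the
linear independence of the products of the members not vanishing at a witness of each pattern. -/
theorem card_zeroPatterns_le {σ F G : Type*} [Fintype σ] [Field F] [Fintype G]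
    (d : ℕ) (f : G → MvPolynomial σ F) (hf : ∀ p x, (f p).degreeOf x ≤ d) :
    (Finset.univ.filter fun Z : Finset G =>
      ∃ a : σ → F, Z = Finset.univ.filter fun p => eval a (f p) = 0).card ≤
      (Fintype.card G * d + 1) ^ Fintype.card σ := by
  set 𝒵 := Finset.univ.filter fun Z : Finset G =>
      ∃ a : σ → F, Z = Finset.univ.filter fun p => eval a (f p) = 0 with h𝒵
  have hw : ∀ Z : 𝒵, ∃ a : σ → F, (Z : Finset G) = Finset.univ.filter fun p => eval a (f p) = 0 :=
    fun Z => (Finset.mem_filter.1 Z.2).2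
  choose a ha using hw
  let g : 𝒵 → MvPolynomial σ F := fun Z => ∏ p ∈ (Z : Finset G)ᶜ, f p
  have hval : ∀ Y Z : 𝒵, eval (a Y) (g Z) ≠ 0 ↔ (Y : Finset G) ⊆ Z := by
    intro Y Z
    simp only [g, map_prod, Finset.prod_ne_zero_iff, Finset.mem_compl]
    have hY : ∀ p, p ∈ (Y : Finset G) ↔ eval (a Y) (f p) = 0 := fun p => by
      conv_lhs => rw [ha Y]
      simp
    constructor
    · intro h p hp
      by_contra hpZ
      exact h p hpZ ((hY p).1 hp)
    · intro h p hp h0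
      exact hp (h ((hY p).2 h0))
  have hli : LinearIndependent F g := by
    rw [Fintype.linearIndependent_iff]
    intro c hc
    by_contra! hne
    obtain ⟨Y, hY⟩ := Finset.exists_maximal (s := Finset.univ.filter fun Z : 𝒵 => c Z ≠ 0)
      (by obtain ⟨i, hi⟩ := hne; exact ⟨i, by simpa using hi⟩)
    have h0 := congrArg (eval (a Y)) hc
    rw [map_sum, map_zero, Finset.sum_eq_single Y] at h0
    · rw [smul_eval] at h0
      have h1 := (hval Y Y).2 subset_rfl
      have h2 := (Finset.mem_filter.1 hY.1).2
      exact mul_ne_zero h2 h1 h0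
    · intro Z _ hZY
      rw [smul_eval]
      by_contra h
      have h1 := left_ne_zero_of_mul h
      have h2 := (hval Y Z).1 (right_ne_zero_of_mul h)
      exact hZY (Subtype.ext (subset_antisymm (hY.2 (by simpa using h1) h2) h2))
    · simp
  have := card_le_of_linearIndependent_of_degreeOf_le (Fintype.card G * d) g hli (fun Z x => by
    calc (g Z).degreeOf x ≤ ∑ p ∈ (Z : Finset G)ᶜ, (f p).degreeOf x := degreeOf_prod_le _ _ _
      _ ≤ ∑ p ∈ (Z : Finset G)ᶜ, d := Finset.sum_le_sum fun p _ => hf p x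
      _ ≤ Fintype.card G * d := by
        rw [Finset.sum_const, smul_eq_mul]
        exact Nat.mul_le_mul_right _ (Finset.card_le_univ _))
  simpa using this

open Classical in
/-- A nonzero polynomial of individual degree at most `k` vanishes on at most half of a grid of
side at least `2 * N * k`. -/
theorem two_mul_card_zeros_le {F : Type*} [Field F] [CharZero F] {N k n : ℕ} (hn : 2 * (N * k) ≤ n)
    (hn0 : 0 < n)
    (P : MvPolynomial (Fin N) F) (hP : P ≠ 0) (hk : ∀ v, P.degreeOf v ≤ k) :
    2 * (Finset.univ.filter fun p : Fin N → Fin n => eval (fun i => ((p i : ℕ) : F)) P = 0).card ≤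
      Fintype.card (Fin N → Fin n) := by
  let S : Finset F := (Finset.range n).image Nat.cast
  have hS : S.card = n := by
    rw [Finset.card_image_of_injective _ Nat.cast_injective, Finset.card_range]
  have sz := schwartz_zippel_sum_degreeOf hP (fun _ => S)
  simp only [hS, Finset.prod_const, Finset.card_univ, Fintype.card_fin] at sz
  have hle : (Finset.univ.filter fun p : Fin N → Fin n =>
      eval (fun i => ((p i : ℕ) : F)) P = 0).card ≤
      ((Fintype.piFinset fun _ : Fin N => S).filter fun x => eval x P = 0).card := by
    refine Finset.card_le_card_of_injOn (fun p i => ((p i : ℕ) : F)) ?_ ?_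
    · intro p hp
      have := (Finset.mem_filter.1 hp).2
      simp only [Finset.coe_filter, Set.mem_ofPred_eq, Fintype.mem_piFinset]
      exact ⟨fun i => Finset.mem_image.2 ⟨p i, by simp, rfl⟩, this⟩
    · intro p _ q _ h
      ext i
      have := congrFun h i
      simpa only [Nat.cast_inj] using this
  set A := (Finset.univ.filter fun p : Fin N → Fin n =>
      eval (fun i => ((p i : ℕ) : F)) P = 0).card
  set B := ((Fintype.piFinset fun _ : Fin N => S).filter fun x => eval x P = 0).card
  have hsum : ∑ i, ((P.degreeOf i : ℚ≥0) / n) ≤ 1 / 2 := by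
    calc ∑ i, ((P.degreeOf i : ℚ≥0) / n) ≤ ∑ i : Fin N, ((k : ℚ≥0) / n) := by
          gcongr with i; exact hk i
      _ = (N * k : ℚ≥0) / n := by simp [mul_div_assoc]
      _ ≤ 1 / 2 := by
        rw [div_le_div_iff₀ (by exact_mod_cast hn0) (by norm_num)]
        have : ((2 * (N * k) : ℕ) : ℚ≥0) ≤ n := by exact_mod_cast hn
        push_cast at this
        rwa [one_mul, mul_comm]
  have h2 := sz.trans hsum
  rw [div_le_div_iff₀ (by positivity) (by norm_num)] at h2
  have h3 : B * 2 ≤ n ^ N := by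
    have : ((B * 2 : ℕ) : ℚ≥0) ≤ ((n ^ N : ℕ) : ℚ≥0) := by push_cast; rwa [one_mul] at h2
    exact_mod_cast this
  simp only [Fintype.card_pi, Finset.prod_const, Finset.card_univ, Fintype.card_fin]
  omega

theorem exists_coordinates_cover {N s : ℕ} (hN : 0 < N) (A : Finset (Fin N)) (hA : A.card ≤ s) :
    ∃ v : Fin s → Fin N, ∀ x ∈ A, ∃ y, v y = x := by
  refine ⟨fun y => if h : (y : ℕ) < A.card then A.equivFin.symm ⟨y, h⟩ else ⟨0, hN⟩, fun x hx => ?_⟩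
  refine ⟨⟨A.equivFin ⟨x, hx⟩, (A.equivFin ⟨x, hx⟩).2.trans_le hA⟩, ?_⟩
  simp

/-- A hitting set for sums of `T` products of `d` polynomials in at most `s` variables each. On the
grid, the summands are determined by the values of the factors on the `s`-tuples of coordinates
they depend on, which serve as the parameters of a polynomial family. -/
theorem exists_hittingSet_card_le (F : Type*) [Field F] [CharZero F] {N k s n T d : ℕ} (hN : 0 < N)
    (hn : 2 * (N * k) ≤ n) (hn0 : 0 < n) :
    ∃ H : Finset (Fin N → F), H.card ≤ (n * N + d) * (T * (d * (N ^ s * n ^ s))) + 1 ∧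
      ∀ P : MvPolynomial (Fin N) F, P ≠ 0 → (∀ v, P.degreeOf v ≤ k) →
        ∀ Q : Fin T → Fin d → MvPolynomial (Fin N) F, (∀ i j, (Q i j).vars.card ≤ s) →
          P = ∑ i, ∏ j, Q i j → ∃ p ∈ H, eval p P ≠ 0 := by
  classical
  let σ := Fin T × Fin d × (Fin s → Fin N) × (Fin s → Fin n)
  let G := Fin N → Fin n
  let pt : G → Fin N → F := fun p i => ((p i : ℕ) : F)
  let f : G → MvPolynomial σ F := fun p =>
    ∑ i : Fin T, ∏ j : Fin d, ∑ v : Fin s → Fin N, X (i, j, v, p ∘ v)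
  have hf : ∀ p x, (f p).degreeOf x ≤ d := by
    intro p x
    refine (degreeOf_sum_le _ _ _).trans (Finset.sup_le fun i _ => ?_)
    refine (degreeOf_prod_le _ _ _).trans ?_
    calc _ ≤ ∑ j : Fin d, 1 := Finset.sum_le_sum fun j _ => by
          refine (degreeOf_sum_le _ _ _).trans (Finset.sup_le fun v _ => ?_)
          rw [degreeOf_X]
          split_ifs <;> simp
      _ = d := by simp
  have hcard := card_zeroPatterns_le d f hf
  set 𝒵 := Finset.univ.filter fun Z : Finset G =>
      ∃ a : σ → F, Z = Finset.univ.filter fun p => eval a (f p) = 0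
  have hσ : Fintype.card σ = T * (d * (N ^ s * n ^ s)) := by simp [σ]
  have hG : Fintype.card G = n ^ N := by simp [G]
  rw [hσ, hG] at hcard
  have : Nonempty G := ⟨fun _ => ⟨0, hn0⟩⟩
  have hbase : n ^ N * d + 1 ≤ 2 ^ (n * N + d) := by
    have h1 : n ^ N ≤ 2 ^ (n * N) := by
      rw [pow_mul]; exact Nat.pow_le_pow_left Nat.lt_two_pow_self.le _
    have h2 : d + 1 ≤ 2 ^ d := Nat.lt_two_pow_self
    have h3 : 1 ≤ n ^ N := Nat.one_le_pow _ _ hn0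
    calc n ^ N * d + 1 ≤ n ^ N * (d + 1) := by rw [mul_add, mul_one]; omega
      _ ≤ 2 ^ (n * N) * 2 ^ d := Nat.mul_le_mul h1 h2
      _ = _ := by rw [pow_add]
  obtain ⟨H, hH, hhit⟩ := exists_hitting_finset_of_card_lt
    ((n * N + d) * (T * (d * (N ^ s * n ^ s))) + 1)
    (𝒵.filter fun Z => 2 * Z.card ≤ Fintype.card G) (fun Z hZ => (Finset.mem_filter.1 hZ).2) (by
      calc _ ≤ 𝒵.card := Finset.card_filter_le _ _
        _ ≤ _ := hcard
        _ ≤ (2 ^ (n * N + d)) ^ (T * (d * (N ^ s * n ^ s))) := Nat.pow_le_pow_left hbase _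
        _ = 2 ^ ((n * N + d) * (T * (d * (N ^ s * n ^ s)))) := by rw [← pow_mul]
        _ < _ := Nat.pow_lt_pow_right (by norm_num) (Nat.lt_succ_self _))
  refine ⟨H.image pt, Finset.card_image_le.trans hH, fun P hP hk Q hQ hPQ => ?_⟩
  choose v hv using fun i j => exists_coordinates_cover hN (Q i j).vars (hQ i j)
  have hdep : ∀ i j, ∀ p q : G, p ∘ v i j = q ∘ v i j →
      eval (pt p) (Q i j) = eval (pt q) (Q i j) := by
    intro i j p q hpq
    refine eval₂Hom_congr' rfl (fun x hx _ => ?_) rfl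
    obtain ⟨y, rfl⟩ := hv i j x hx
    have := congrFun hpq y
    simp only [Function.comp] at this
    simp [pt, this]
  let a : σ → F := fun x =>
    if x.2.2.1 = v x.1 x.2.1 then
      if h : ∃ p : G, p ∘ v x.1 x.2.1 = x.2.2.2 then eval (pt h.choose) (Q x.1 x.2.1) else 0
    else 0
  have ha : ∀ p, eval a (f p) = eval (pt p) P := by
    intro p
    simp only [f, hPQ, map_sum, map_prod, eval_X]
    refine Finset.sum_congr rfl fun i _ => Finset.prod_congr rfl fun j _ => ?_
    rw [Finset.sum_eq_single (v i j)]
    · have h : ∃ q : G, q ∘ v i j = p ∘ v i j := ⟨p, rfl⟩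
      simp only [a, if_true, dif_pos h]
      exact hdep i j _ _ h.choose_spec
    · intro w _ hw
      simp [a, hw]
    · simp
  have hzero := two_mul_card_zeros_le hn hn0 P hP hk
  obtain ⟨p, hp, hpZ⟩ := hhit (Finset.univ.filter fun p : G => eval (pt p) P = 0)
    (Finset.mem_filter.2 ⟨Finset.mem_filter.2 ⟨Finset.mem_univ _, a, by simp only [ha]⟩, hzero⟩)
  exact ⟨pt p, Finset.mem_image_of_mem _ hp, by simpa using hpZ⟩

theorem hittingSet_size_le_pow {N s C T d : ℕ} (hN : 2 ≤ N) (hT : T ≤ N) (hd : d ≤ N ^ C) :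
    ((2 * (N * N) + 1) * N + d) * (T * (d * (N ^ s * (2 * (N * N) + 1) ^ s))) + 1 ≤
      N ^ (8 + 2 * C + 5 * s) := by
  have hn : 2 * (N * N) + 1 ≤ N ^ 4 := by nlinarith [Nat.mul_le_mul hN hN, sq_nonneg (N * N - 1)]
  have one_le : ∀ m, 1 ≤ N ^ m := fun m => Nat.one_le_pow _ _ (by omega)
  have hadd : ∀ x m, x ≤ N ^ m → ∀ y, y ≤ N ^ m → x + y ≤ N ^ (m + 1) := by
    intro x m hx y hy
    rw [pow_succ]
    nlinarith [one_le m]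
  have h1 : (2 * (N * N) + 1) * N + d ≤ N ^ (5 + C + 1) := by
    refine hadd _ _ ?_ _ (hd.trans (Nat.pow_le_pow_right (by omega) (by omega)))
    calc (2 * (N * N) + 1) * N ≤ N ^ 4 * N := Nat.mul_le_mul_right _ hn
      _ = N ^ 5 := by ring
      _ ≤ _ := Nat.pow_le_pow_right (by omega) (by omega)
  have e : 8 + 2 * C + 5 * s = (7 + 2 * C + 5 * s) + 1 := by ring
  rw [e]
  refine hadd _ _ ?_ _ (one_le _)
  calc _ ≤ N ^ (5 + C + 1) * (N * (N ^ C * (N ^ s * (N ^ 4) ^ s))) := by gcongr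
    _ = _ := by rw [← pow_mul]; ring

open Filter in
theorem eventually_natPow_le_exp (A : ℕ) (μ : ℝ) (hμ : μ < 1 / 2) :
    ∀ᶠ N : ℕ in atTop, ((N ^ (A + 5 * ⌊(N : ℝ) ^ μ⌋₊) : ℕ) : ℝ) ≤
      Real.exp ((N : ℝ) ^ (3 / 4 : ℝ)) := by
  have hlog := (isLittleO_log_rpow_atTop (r := 1 / 4) (by norm_num)).bound
    (c := 1 / (A + 5)) (by positivity)
  filter_upwards [tendsto_natCast_atTop_atTop.eventually hlog, eventually_ge_atTop 1] with N h hN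
  have hN1 : (1 : ℝ) ≤ N := by exact_mod_cast hN
  have hN0 : (0 : ℝ) < N := by linarith
  have hl0 := Real.log_nonneg hN1
  rw [Real.norm_of_nonneg hl0, Real.norm_of_nonneg (by positivity)] at h
  push_cast
  rw [← Real.rpow_natCast, Real.rpow_def_of_pos hN0, Real.exp_le_exp]
  have hs : ((A + 5 * ⌊(N : ℝ) ^ μ⌋₊ : ℕ) : ℝ) ≤ (A + 5) * (N : ℝ) ^ (1 / 2 : ℝ) := by
    have h1 : (⌊(N : ℝ) ^ μ⌋₊ : ℝ) ≤ (N : ℝ) ^ μ := Nat.floor_le (by positivity)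
    have h2 : (N : ℝ) ^ μ ≤ (N : ℝ) ^ (1 / 2 : ℝ) := Real.rpow_le_rpow_of_exponent_le hN1 hμ.le
    have h3 : (1 : ℝ) ≤ (N : ℝ) ^ (1 / 2 : ℝ) := Real.one_le_rpow hN1 (by norm_num)
    push_cast
    nlinarith [(Nat.cast_nonneg A : (0 : ℝ) ≤ A)]
  calc _ ≤ (1 / (A + 5) * (N : ℝ) ^ (1 / 4 : ℝ)) * ((A + 5) * (N : ℝ) ^ (1 / 2 : ℝ)) := by gcongr
    _ = (N : ℝ) ^ (1 / 4 : ℝ) * (N : ℝ) ^ (1 / 2 : ℝ) := by field_simp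
    _ = (N : ℝ) ^ (3 / 4 : ℝ) := by rw [← Real.rpow_add hN0]; norm_num

open Filter in
theorem eventually_log_rpow_le (c : ℝ) : ∀ᶠ N : ℕ in atTop, Real.log N ^ c ≤ N := by
  have h := (isLittleO_log_rpow_rpow_atTop c (s := 1) one_pos).bound (c := 1) one_pos
  filter_upwards [tendsto_natCast_atTop_atTop.eventually h] with N h
  rw [one_mul, Real.rpow_one, Real.norm_of_nonneg (Nat.cast_nonneg N)] at h
  exact (le_abs_self _).trans h

/-- For constants `c > 0` and `0 ≤ μ < 1/2` there exists a constant
`ε < 1` (depending only on `c` and `μ`) such that for all sufficiently large `N` there is a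
set `H ⊆ F^N` of size at most `exp(N^ε)` that is a hitting set for the class of nonzero
polynomials `P` in `N` variables, of individual degree at most `k`, expressible as
`P = ∑_{i=1}^T ∏_{j=1}^d Q_{ij}` with `T < (log N)^c`, `k < (log N)^c`, `d < N^c` and each
`Q_{ij}` depending on at most `N^μ` variables. -/
theorem stmt1 (F : Type*) [Field F] [CharZero F] (c μ : ℝ)
    (hc : 0 < c) (hμ0 : 0 ≤ μ) (hμ : μ < 1 / 2) :
    ∃ ε : ℝ, ε < 1 ∧ ∃ N₀ : ℕ, ∀ N : ℕ, N₀ ≤ N →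
      ∃ H : Finset (Fin N → F),
        (H.card : ℝ) ≤ Real.exp ((N : ℝ) ^ ε) ∧
        ∀ P : MvPolynomial (Fin N) F, P ≠ 0 →
          (∃ (T d k : ℕ) (Q : Fin T → Fin d → MvPolynomial (Fin N) F),
            (T : ℝ) < Real.log N ^ c ∧
            (k : ℝ) < Real.log N ^ c ∧
            (d : ℝ) < (N : ℝ) ^ c ∧
            (∀ v : Fin N, P.degreeOf v ≤ k) ∧
            (∀ i j, ((Q i j).vars.card : ℝ) ≤ (N : ℝ) ^ μ) ∧
            P = ∑ i, ∏ j, Q i j) →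
          ∃ p ∈ H, eval p P ≠ 0 := by
  classical
  let C := ⌈c⌉₊
  refine ⟨3 / 4, by norm_num, ?_⟩
  obtain ⟨N₀, hN₀⟩ := Filter.eventually_atTop.1
    ((eventually_natPow_le_exp (9 + 3 * C) μ hμ).and
      ((eventually_log_rpow_le c).and (Filter.eventually_ge_atTop 2)))
  refine ⟨N₀, fun N hN => ?_⟩
  obtain ⟨hexp, hlog, hN2⟩ := hN₀ N hN
  set s := ⌊(N : ℝ) ^ μ⌋₊
  choose H hcard hH using fun T d => exists_hittingSet_card_le F (N := N) (k := N) (s := s)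
    (n := 2 * (N * N) + 1) (T := T) (d := d) (by omega) (by omega) (by omega)
  refine ⟨(Finset.range N ×ˢ Finset.range (N ^ C)).biUnion fun x => H x.1 x.2, ?_, ?_⟩
  · refine le_trans (Nat.cast_le.2 ?_) hexp
    calc _ ≤ (Finset.range N ×ˢ Finset.range (N ^ C)).card * N ^ (8 + 2 * C + 5 * s) := by
          refine Finset.card_biUnion_le_card_mul _ _ _ fun x hx => (hcard x.1 x.2).trans ?_
          rw [Finset.mem_product, Finset.mem_range, Finset.mem_range] at hx
          exact hittingSet_size_le_pow hN2 hx.1.le hx.2.le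
      _ = _ := by rw [Finset.card_product, Finset.card_range, Finset.card_range]; ring
  · rintro P hP ⟨T, d, k, Q, hT, hk, hd, hdeg, hvars, hPQ⟩
    have hTN : T < N := by exact_mod_cast hT.trans_le hlog
    have hkN : k < N := by exact_mod_cast hk.trans_le hlog
    have hdN : d < N ^ C := by
      have h1 : (N : ℝ) ^ c ≤ (N : ℝ) ^ (C : ℝ) :=
        Real.rpow_le_rpow_of_exponent_le (by exact_mod_cast (by omega : 1 ≤ N)) (Nat.le_ceil c)
      rw [Real.rpow_natCast] at h1
      exact_mod_cast hd.trans_le h1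
    obtain ⟨p, hp, hpP⟩ := hH T d P hP (fun v => (hdeg v).trans hkN.le) Q
      (fun i j => Nat.le_floor (hvars i j)) hPQ
    exact ⟨p, Finset.mem_biUnion.2 ⟨(T, d), by simp [hTN, hdN], hp⟩, hpP⟩
end
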